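/- arXiv:1905.11491 — 3 statements merged into one kernel-verified Lean document; each statement's English description precedes it below -/
import Mathlib

section
/- Let q > 0 and let P : ℝ³ → (0, ∞) be a continuous radially symmetric function (P(x) depends only on |x|) with ∫_{ℝ³} |x| P(x)^{−q} dx < ∞. Then there exists a continuous radially symmetric function v : ℝ³ → ℝ with sup_{x∈ℝ³} |v(x)|/(1+|x|) < ∞, min_{ℝ³} v = v(0) = 0, satisfying v(x) = (1/8π)∫_{ℝ³} (|x−y| − |y|) (P(y) + v(y))^{−q} dy for all x ∈ ℝ³, and lim_{|x|→∞} v(x)/|x| = (1/8π)∫_{ℝ³} (P(y) + v(y))^{−q} dy. -/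
open MeasureTheory Filter Topology Real

/-!
Archimedes' theorem gives the law of `(⟪e, y⟫, ‖y‖)` under the volume of `ℝ³`, and integrating the
law of cosines against it shows that a radial `v = w ∘ ‖·‖` solves the equation iff
`w(r) = r² / 6 * ∫₀^∞ (1 - k(r, s)) s (p(s) + w(s)) ^ (-q) ds` with `k(r, s) = ((r - s)₊ / r)³`.
Since `k` is supported in `s < r`, for `w = r² u / 6` this is a Volterra equation
`u(r) = b - ∫₀^r k(r, s) G(s, u(s)) ds` in which the constant `b` is the global quantity
`∫₀^∞ G(s, u(s)) ds`. For every prescribed `b` a contraction argument in a weighted norm gives a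
solution `u_b` depending continuously on `b`. The map `b ↦ ∫₀^∞ G(s, u_b(s)) ds` sends a
compact interval into itself, so the intermediate value theorem provides a consistent `b`.
-/

open Set Module Function
open scoped RealInnerProductSpace ENNReal NNReal BoundedContinuousFunction

/-! ### Potentials of the distance kernel -/

/-- The potential of the density `f` for the kernel `‖x‖`, which in dimension three is up to a
constant the fundamental solution of the bilaplacian. Subtracting `‖y‖` makes it vanish at the
origin and bounds the kernel, so that it converges for every integrable `f`. -/
noncomputable def distPotential {E : Type*} [NormedAddCommGroup E] [MeasurableSpace E]
    (μ : Measure E) (f : E → ℝ) (x : E) : ℝ :=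
  ∫ y, (‖x - y‖ - ‖y‖) * f y ∂μ

section DistPotential

variable {E : Type*} [NormedAddCommGroup E]

lemma abs_norm_sub_sub_norm_le (x y : E) : |‖x - y‖ - ‖y‖| ≤ ‖x‖ := by
  simpa using abs_norm_sub_norm_le (x - y) (-y)

lemma abs_norm_sub_sub_norm_sub_norm_le (x y : E) : |‖x - y‖ - ‖y‖ - ‖x‖| ≤ 2 * ‖y‖ := by
  rw [abs_le]
  constructor <;> linarith [norm_sub_le x y, norm_sub_norm_le x y, norm_nonneg y]

variable [MeasurableSpace E] {μ : Measure E} {f : E → ℝ}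

lemma abs_distPotential_le (hf : Integrable f μ) (x : E) :
    |distPotential μ f x| ≤ (∫ y, |f y| ∂μ) * ‖x‖ := by
  rw [distPotential, ← integral_mul_const, ← Real.norm_eq_abs]
  refine norm_integral_le_of_norm_le (hf.abs.mul_const ‖x‖) (ae_of_all _ fun y => ?_)
  rw [norm_mul, mul_comm, Real.norm_eq_abs, Real.norm_eq_abs]
  gcongr
  exact abs_norm_sub_sub_norm_le x y

variable [OpensMeasurableSpace E]

lemma integrable_norm_sub_sub_norm_mul (hf : Integrable f μ) (x : E) :
    Integrable (fun y => (‖x - y‖ - ‖y‖) * f y) μ :=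
  hf.bdd_mul (c := ‖x‖) (Continuous.aestronglyMeasurable (by fun_prop))
    (ae_of_all _ fun y => abs_norm_sub_sub_norm_le x y)

lemma abs_distPotential_sub_le (hf : Integrable f μ) (hf' : Integrable (fun y => ‖y‖ * f y) μ)
    (x : E) :
    |distPotential μ f x - ‖x‖ * ∫ y, f y ∂μ| ≤ 2 * ∫ y, ‖y‖ * |f y| ∂μ := by
  rw [distPotential, ← integral_const_mul, ← integral_const_mul, ← Real.norm_eq_abs,
    ← integral_sub (integrable_norm_sub_sub_norm_mul hf x) (hf.const_mul ‖x‖)]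
  have hbound : Integrable (fun y => 2 * (‖y‖ * |f y|)) μ := by
    simpa [abs_mul] using hf'.abs.const_mul 2
  refine norm_integral_le_of_norm_le hbound (ae_of_all _ fun y => ?_)
  rw [← sub_mul, norm_mul, ← mul_assoc, Real.norm_eq_abs, Real.norm_eq_abs]
  gcongr
  exact abs_norm_sub_sub_norm_sub_norm_le x y

lemma tendsto_distPotential_div_norm [ProperSpace E] (hf : Integrable f μ)
    (hf' : Integrable (fun y => ‖y‖ * f y) μ) :
    Tendsto (fun x => distPotential μ f x / ‖x‖) (cocompact E) (𝓝 (∫ y, f y ∂μ)) := by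
  have herror : Tendsto (fun x : E => (2 * ∫ y, ‖y‖ * |f y| ∂μ) / ‖x‖) (cocompact E) (𝓝 0) :=
    tendsto_norm_cocompact_atTop.const_div_atTop _
  rw [tendsto_iff_norm_sub_tendsto_zero]
  refine squeeze_zero' (Eventually.of_forall fun x => norm_nonneg _) ?_ herror
  filter_upwards [tendsto_norm_cocompact_atTop.eventually_gt_atTop 0] with x hx
  rw [← mul_div_cancel_left₀ (∫ y, f y ∂μ) hx.ne', ← sub_div, norm_div, norm_norm]
  gcongr
  exact abs_distPotential_sub_le hf hf' x

end DistPotential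

/-! ### Archimedes' theorem -/

section Archimedes

lemma image_sq_Ioi_zero : (fun r : ℝ => r ^ 2) '' Ioi 0 = Ioi 0 := by
  ext t
  refine ⟨?_, fun ht => ⟨√t, Real.sqrt_pos.2 ht, Real.sq_sqrt (le_of_lt ht)⟩⟩
  rintro ⟨r, hr, rfl⟩
  exact pow_pos (mem_Ioi.1 hr) 2

lemma lintegral_Ioi_comp_sq (F : ℝ → ℝ≥0∞) :
    ∫⁻ r in Ioi (0 : ℝ), ENNReal.ofReal (2 * r) * F (r ^ 2) = ∫⁻ t in Ioi (0 : ℝ), F t := by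
  have hderiv : ∀ r ∈ Ioi (0 : ℝ), HasDerivWithinAt (fun r : ℝ => r ^ 2) (2 * r) (Ioi 0) r :=
    fun r _ => by simpa using (hasDerivAt_pow 2 r).hasDerivWithinAt
  have hmono : MonotoneOn (fun r : ℝ => r ^ 2) (Ioi 0) :=
    fun a ha b _ hab => pow_le_pow_left₀ (le_of_lt ha) hab 2
  rw [← lintegral_image_eq_lintegral_deriv_mul_of_monotoneOn measurableSet_Ioi hderiv hmono,
    image_sq_Ioi_zero]

lemma lintegral_comp_sq_add_sq {F : ℝ → ℝ≥0∞} (hF : Measurable F) :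
    ∫⁻ p : ℝ × ℝ, F (p.1 ^ 2 + p.2 ^ 2) = ENNReal.ofReal π * ∫⁻ t in Ioi (0 : ℝ), F t := by
  have hpolar : ∀ p : ℝ × ℝ, (polarCoord.symm p).1 ^ 2 + (polarCoord.symm p).2 ^ 2 = p.1 ^ 2 :=
    fun p => by
      rw [polarCoord_symm_apply]
      linear_combination p.1 ^ 2 * Real.sin_sq_add_cos_sq p.2
  rw [← lintegral_comp_polarCoord_symm, ← lintegral_Ioi_comp_sq]
  simp_rw [hpolar, smul_eq_mul]
  rw [polarCoord_target, Measure.volume_eq_prod, ← Measure.prod_restrict,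
    lintegral_prod _ (by fun_prop), ← lintegral_const_mul' _ _ ENNReal.ofReal_ne_top]
  refine lintegral_congr fun r => ?_
  dsimp only
  rw [lintegral_const, Measure.restrict_apply_univ, Real.volume_Ioo, ← mul_assoc,
    ← ENNReal.ofReal_mul pi_pos.le, mul_right_comm, mul_comm (ENNReal.ofReal r),
    ← ENNReal.ofReal_mul (by linarith [pi_pos])]
  ring_nf

lemma measurePreserving_fin_three_coords :
    MeasurePreserving (fun y : EuclideanSpace ℝ (Fin 3) => (y 0, y 1, y 2)) :=
  (((MeasurePreserving.id volume).prod (volume_preserving_finTwoArrow ℝ)).comp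
    (volume_preserving_piFinSuccAbove (fun _ : Fin 3 => ℝ) 0)).comp
    (PiLp.volume_preserving_ofLp (Fin 3))

variable {E : Type*} [NormedAddCommGroup E] [InnerProductSpace ℝ E]

lemma exists_orthonormalBasis_fin_three [FiniteDimensional ℝ E] (hE : finrank ℝ E = 3) {e : E}
    (he : ‖e‖ = 1) :
    ∃ b : OrthonormalBasis (Fin 3) ℝ E, b 0 = e := by
  have horth : Orthonormal ℝ (({0} : Set (Fin 3)).domRestrict fun _ => e) := by
    simp [he]
  obtain ⟨b, hb⟩ := horth.exists_orthonormalBasis_extension_of_card_eq (by simpa using hE)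
  exact ⟨b, hb 0 rfl⟩

variable [FiniteDimensional ℝ E] [MeasurableSpace E] [BorelSpace E]

lemma map_inner_norm_sq (hE : finrank ℝ E = 3) {e : E} (he : ‖e‖ = 1) :
    Measure.map (fun y => (⟪e, y⟫, ‖y‖ ^ 2)) volume =
      ENNReal.ofReal π • volume.restrict {p : ℝ × ℝ | p.1 ^ 2 < p.2} := by
  obtain ⟨b, rfl⟩ := exists_orthonormalBasis_fin_three hE he
  have hcoords := measurePreserving_fin_three_coords.comp b.measurePreserving_repr
  refine Measure.ext_of_lintegral _ fun F hF => ?_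
  have hF_coords : ∀ y : E, F (⟪b 0, y⟫, ‖y‖ ^ 2) =
      (fun p : ℝ × ℝ × ℝ => F (p.1, p.1 ^ 2 + (p.2.1 ^ 2 + p.2.2 ^ 2)))
        (b.repr y 0, b.repr y 1, b.repr y 2) := fun y => by
    rw [← b.repr.norm_map y, EuclideanSpace.real_norm_sq_eq, Fin.sum_univ_three, b.repr_apply_apply,
      add_assoc]
  -- On the slice `⟪b 0, y⟫ = z`, `τ = ‖y‖ ^ 2` is `z ^ 2` plus the squared norm of a planar vector.
  have hslice : ∀ z : ℝ, ∫⁻ p : ℝ × ℝ, F (z, z ^ 2 + (p.1 ^ 2 + p.2 ^ 2)) =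
      ENNReal.ofReal π * ∫⁻ τ, (Ioi (z ^ 2)).indicator (fun τ => F (z, τ)) τ := fun z => by
    rw [lintegral_comp_sq_add_sq (F := fun t => F (z, z ^ 2 + t)) (by fun_prop),
      ← lintegral_indicator measurableSet_Ioi,
      ← lintegral_add_left_eq_self ((Ioi (z ^ 2)).indicator _) (z ^ 2)]
    simp [indicator]
  have hset : MeasurableSet {p : ℝ × ℝ | p.1 ^ 2 < p.2} :=
    measurableSet_lt (by fun_prop) (by fun_prop)
  calc ∫⁻ p, F p ∂Measure.map (fun y => (⟪b 0, y⟫, ‖y‖ ^ 2)) volume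
      = ∫⁻ y : E, F (⟪b 0, y⟫, ‖y‖ ^ 2) := lintegral_map hF (by fun_prop)
    _ = ∫⁻ z : ℝ, ∫⁻ p : ℝ × ℝ, F (z, z ^ 2 + (p.1 ^ 2 + p.2 ^ 2)) := by
      simp_rw [hF_coords]
      rw [← lintegral_prod (fun p : ℝ × ℝ × ℝ => F (p.1, p.1 ^ 2 + (p.2.1 ^ 2 + p.2.2 ^ 2)))
        (by fun_prop)]
      exact hcoords.lintegral_comp
        (f := fun p : ℝ × ℝ × ℝ => F (p.1, p.1 ^ 2 + (p.2.1 ^ 2 + p.2.2 ^ 2))) (by fun_prop)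
    _ = ENNReal.ofReal π * ∫⁻ p : ℝ × ℝ, {p : ℝ × ℝ | p.1 ^ 2 < p.2}.indicator F p := by
      simp_rw [hslice]
      rw [lintegral_const_mul' _ _ ENNReal.ofReal_ne_top, Measure.volume_eq_prod,
        lintegral_prod _ (hF.indicator hset).aemeasurable]
      rfl
    _ = _ := by rw [lintegral_indicator hset, lintegral_smul_measure, smul_eq_mul]

variable {V : Type*} [NormedAddCommGroup V] [NormedSpace ℝ V]

lemma integral_comp_inner_norm_sq (hE : finrank ℝ E = 3) {e : E} (he : ‖e‖ = 1)
    {F : ℝ × ℝ → V} (hF : StronglyMeasurable F)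
    (hint : Integrable fun y : E => F (⟪e, y⟫, ‖y‖ ^ 2)) :
    ∫ y : E, F (⟪e, y⟫, ‖y‖ ^ 2) = π • ∫ τ in Ioi (0 : ℝ), ∫ z in -√τ..√τ, F (z, τ) := by
  have hset : MeasurableSet {p : ℝ × ℝ | p.1 ^ 2 < p.2} :=
    measurableSet_lt (by fun_prop) (by fun_prop)
  have hmeas : Measurable fun y : E => (⟪e, y⟫, ‖y‖ ^ 2) := by fun_prop
  have hint_region : IntegrableOn F {p : ℝ × ℝ | p.1 ^ 2 < p.2} := by
    have hint_map := (integrable_map_measure hF.aestronglyMeasurable hmeas.aemeasurable).2 hint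
    rwa [map_inner_norm_sq hE he,
      integrable_smul_measure (by simp [pi_pos]) ENNReal.ofReal_ne_top] at hint_map
  rw [← integral_map hmeas.aemeasurable hF.aestronglyMeasurable, map_inner_norm_sq hE he,
    integral_smul_measure, ENNReal.toReal_ofReal pi_pos.le, ← integral_indicator hset,
    Measure.volume_eq_prod, integral_prod_symm _ ((integrable_indicator_iff hset).2 hint_region),
    ← integral_indicator measurableSet_Ioi]
  congr 2 with τ
  by_cases hτ : 0 < τ
  · rw [indicator_of_mem (mem_Ioi.2 hτ),
      intervalIntegral.integral_of_le (neg_le_self (Real.sqrt_nonneg τ)),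
      integral_Ioc_eq_integral_Ioo, ← integral_indicator measurableSet_Ioo]
    congr 1 with z
    simp [indicator, ← abs_lt, Real.lt_sqrt]
  · rw [indicator_of_notMem (notMem_Ioi.2 (not_lt.1 hτ))]
    refine integral_eq_zero_of_ae (ae_of_all _ fun z => indicator_of_notMem (fun h => hτ ?_) _)
    exact (sq_nonneg z).trans_lt h

lemma integral_comp_inner_norm (hE : finrank ℝ E = 3) {e : E} (he : ‖e‖ = 1)
    {F : ℝ × ℝ → V} (hF : StronglyMeasurable F) (hint : Integrable fun y : E => F (⟪e, y⟫, ‖y‖)) :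
    ∫ y : E, F (⟪e, y⟫, ‖y‖) =
      (2 * π) • ∫ s in Ioi (0 : ℝ), s • ∫ z in -s..s, F (z, s) := by
  have hsqrt (y : E) : F (⟪e, y⟫, ‖y‖) = F (⟪e, y⟫, √(‖y‖ ^ 2)) := by
    rw [Real.sqrt_sq (norm_nonneg y)]
  simp_rw [hsqrt] at hint ⊢
  rw [integral_comp_inner_norm_sq hE he (F := fun p => F (p.1, √p.2))
      (hF.comp_measurable (by fun_prop)) hint,
    ← integral_comp_rpow_Ioi_of_pos two_pos, mul_comm 2 π, mul_smul, ← integral_smul (2 : ℝ)]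
  congr 1
  refine setIntegral_congr_fun measurableSet_Ioi fun s (hs : 0 < s) => ?_
  rw [Real.rpow_two, smul_smul, show (2 : ℝ) - 1 = 1 by norm_num, Real.rpow_one]
  simp only [Real.sqrt_sq hs.le]

/-- For `s > 0` the mean of `‖x - y‖ - ‖y‖` over the sphere `‖y‖ = s` of `ℝ³` is
`r² / (3 s) * (1 - radialKernel r s)` with `r = ‖x‖`. The kernel is `((r - s)₊ / r)³`; writing the
denominator as `max r s` changes nothing where `(r - s)₊ ≠ 0` and avoids the division by zero
at `r = 0`. -/
noncomputable def radialKernel (r s : ℝ) : ℝ :=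
  (max (r - s) 0 / max r s) ^ 3

lemma integral_sqrt_law_of_cosines {r s : ℝ} (hr : 0 < r) (hs : 0 ≤ s) :
    ∫ z in -s..s, √(r ^ 2 - 2 * r * z + s ^ 2) = ((r + s) ^ 3 - |r - s| ^ 3) / (3 * r) := by
  have hcube (a : ℝ) : (a ^ 2) ^ (1 / 2 + 1 : ℝ) = |a| ^ 3 := by
    rw [← sq_abs, ← Real.rpow_natCast, ← Real.rpow_natCast, ← Real.rpow_mul (abs_nonneg a)]
    norm_num
  calc ∫ z in -s..s, √(r ^ 2 - 2 * r * z + s ^ 2)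
      = ∫ z in -s..s, (fun t : ℝ => t ^ (1 / 2 : ℝ)) (r ^ 2 + s ^ 2 - 2 * r * z) := by
        simp_rw [Real.sqrt_eq_rpow]
        congr 1 with z
        ring_nf
    _ = (2 * r)⁻¹ * ∫ t in (r - s) ^ 2..(r + s) ^ 2, t ^ (1 / 2 : ℝ) := by
        rw [intervalIntegral.integral_comp_sub_mul (fun t : ℝ => t ^ (1 / 2 : ℝ)) (by positivity),
          smul_eq_mul]
        ring_nf
    _ = ((r + s) ^ 3 - |r - s| ^ 3) / (3 * r) := by
        rw [integral_rpow (.inl (by norm_num)), hcube, hcube, abs_of_pos (by linarith : 0 < r + s)]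
        field_simp
        norm_num

lemma integral_sqrt_law_of_cosines_sub {r s : ℝ} (hr : 0 < r) (hs : 0 < s) :
    ∫ z in -s..s, (√(r ^ 2 - 2 * r * z + s ^ 2) - s) =
      2 / 3 * r ^ 2 * (1 - radialKernel r s) := by
  rw [intervalIntegral.integral_sub (Continuous.intervalIntegrable (by fun_prop) _ _)
      intervalIntegrable_const, integral_sqrt_law_of_cosines hr hs.le,
    intervalIntegral.integral_const, smul_eq_mul, radialKernel]
  rcases le_total s r with h | h
  · rw [abs_of_nonneg (by linarith), max_eq_left (by linarith), max_eq_left h]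
    field_simp
    ring
  · rw [abs_of_nonpos (by linarith), max_eq_right (by linarith)]
    field_simp
    ring

theorem distPotential_comp_norm (hE : finrank ℝ E = 3) {f : ℝ → ℝ} (hf : Measurable f)
    (hint : Integrable fun y : E => f ‖y‖) (x : E) :
    distPotential volume (fun y => f ‖y‖) x =
      4 * π / 3 * ‖x‖ ^ 2 * ∫ s in Ioi (0 : ℝ), (1 - radialKernel ‖x‖ s) * (s * f s) := by
  rcases eq_or_ne x 0 with rfl | hx
  · simp [distPotential]
  have hr : 0 < ‖x‖ := norm_pos_iff.2 hx
  set e : E := ‖x‖⁻¹ • x with he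
  have he_norm : ‖e‖ = 1 := norm_smul_inv_norm (𝕜 := ℝ) hx
  set F : ℝ × ℝ → ℝ := fun p => (√(‖x‖ ^ 2 - 2 * ‖x‖ * p.1 + p.2 ^ 2) - p.2) * f p.2 with hF
  have hcosines (y : E) : (‖x - y‖ - ‖y‖) * f ‖y‖ = F (⟪e, y⟫, ‖y‖) := by
    have hinner : ‖x‖ * ⟪e, y⟫ = ⟪x, y⟫ := by
      rw [he, real_inner_smul_left, mul_inv_cancel_left₀ hr.ne']
    simp only [hF]
    rw [mul_assoc 2, hinner, ← norm_sub_sq_real, Real.sqrt_sq (norm_nonneg _)]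
  have hint_F := integrable_norm_sub_sub_norm_mul hint x
  simp_rw [distPotential, hcosines] at hint_F ⊢
  have hF_meas : Measurable F := by fun_prop
  rw [integral_comp_inner_norm hE he_norm hF_meas.stronglyMeasurable hint_F, smul_eq_mul,
    ← integral_const_mul, ← integral_const_mul]
  refine setIntegral_congr_fun measurableSet_Ioi fun s (hs : 0 < s) => ?_
  simp only [hF]
  rw [intervalIntegral.integral_mul_const, integral_sqrt_law_of_cosines_sub hr hs, smul_eq_mul]
  ring

end Archimedes

/-! ### Volterra equations and shooting -/

/-- A kernel on `(0, ∞)`, bounded by `1`, continuous in its first variable and supported in `s < r`.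
The first variable `r` ranges over `ℝ`, so the kernel vanishes for `r ≤ 0`. -/
structure IsVolterraKernel (k : ℝ → ℝ → ℝ) : Prop where
  measurable : ∀ r, Measurable (k r)
  continuous : ∀ s, 0 < s → Continuous fun r => k r s
  abs_le_one : ∀ r s, 0 < s → |k r s| ≤ 1
  eq_zero : ∀ r s, 0 < s → r ≤ s → k r s = 0

lemma IsVolterraKernel.neg {k : ℝ → ℝ → ℝ} (hk : IsVolterraKernel k) : IsVolterraKernel (-k) where
  measurable r := (hk.measurable r).neg
  continuous s hs := (hk.continuous s hs).neg
  abs_le_one r s hs := (abs_neg (k r s)).trans_le (hk.abs_le_one r s hs)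
  eq_zero r s hs hrs := neg_eq_zero.2 (hk.eq_zero r s hs hrs)

section VolterraOp

variable {E : Type*} [NormedAddCommGroup E]

/-- A continuous nonlinearity `G`, dominated uniformly in its second variable by an integrable
function of `s ∈ (0, ∞)`. -/
structure IsDominatedBy (G : ℝ → E → E) (g : ℝ → ℝ) : Prop where
  continuous : Continuous (uncurry G)
  integrableOn : IntegrableOn g (Ioi 0)
  norm_le : ∀ s, 0 < s → ∀ t, ‖G s t‖ ≤ g s

lemma IsDominatedBy.integrableOn_comp {G : ℝ → E → E} {g : ℝ → ℝ} (hG : IsDominatedBy G g)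
    {u : ℝ → E} (hu : Continuous u) : IntegrableOn (fun s => G s (u s)) (Ioi 0) := by
  refine hG.integrableOn.mono' (hG.continuous.comp₂ continuous_id hu).aestronglyMeasurable ?_
  exact ae_restrict_of_forall_mem measurableSet_Ioi fun s hs => hG.norm_le s hs _

variable [NormedSpace ℝ E]

/-- The nonlinear Volterra operator `u ↦ ∫₀^∞ k(r, s) G(s, u(s)) ds`. For a Volterra kernel `k` the
integral extends over `(0, r)` only; see `volterraOp_eq_setIntegral_Ioc`. -/
noncomputable def volterraOp (k : ℝ → ℝ → ℝ) (G : ℝ → E → E) (u : ℝ → E) (r : ℝ) : E :=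
  ∫ s in Ioi 0, k r s • G s (u s)

variable {k : ℝ → ℝ → ℝ} {G : ℝ → E → E} {g : ℝ → ℝ} {u u' : ℝ → E}

lemma norm_kernel_smul_le (hk : IsVolterraKernel k) (hG : IsDominatedBy G g) (r : ℝ) :
    ∀ᵐ s ∂volume.restrict (Ioi 0), ‖k r s • G s (u s)‖ ≤ g s :=
  ae_restrict_of_forall_mem measurableSet_Ioi fun s hs => by
    rw [norm_smul]
    exact (mul_le_of_le_one_left (norm_nonneg _) (hk.abs_le_one r s hs)).trans (hG.norm_le s hs _)

lemma integrableOn_kernel_smul (hk : IsVolterraKernel k) (hG : IsDominatedBy G g)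
    (hu : Continuous u) (r : ℝ) : IntegrableOn (fun s => k r s • G s (u s)) (Ioi 0) :=
  hG.integrableOn.mono' ((hk.measurable r).aestronglyMeasurable.smul
    (hG.integrableOn_comp hu).aestronglyMeasurable) (norm_kernel_smul_le hk hG r)

lemma norm_volterraOp_le (hk : IsVolterraKernel k) (hG : IsDominatedBy G g) (r : ℝ) :
    ‖volterraOp k G u r‖ ≤ ∫ s in Ioi 0, g s :=
  norm_integral_le_of_norm_le hG.integrableOn (norm_kernel_smul_le hk hG r)

lemma continuous_volterraOp (hk : IsVolterraKernel k) (hG : IsDominatedBy G g)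
    (hu : Continuous u) : Continuous (volterraOp k G u) :=
  continuous_of_dominated
    (fun r => (integrableOn_kernel_smul hk hG hu r).aestronglyMeasurable)
    (norm_kernel_smul_le hk hG) hG.integrableOn
    (ae_restrict_of_forall_mem measurableSet_Ioi
      fun s hs => (hk.continuous s hs).smul continuous_const)

lemma volterraOp_eq_setIntegral_Ioc (hk : IsVolterraKernel k) (r : ℝ) :
    volterraOp k G u r = ∫ s in Ioc 0 r, k r s • G s (u s) :=
  setIntegral_eq_of_subset_of_forall_sdiff_eq_zero measurableSet_Ioi Ioc_subset_Ioi_self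
    fun s ⟨hs, hsr⟩ => by
      rw [hk.eq_zero r s hs (le_of_not_ge fun h => hsr ⟨hs, h⟩), zero_smul]

lemma volterraOp_of_nonpos (hk : IsVolterraKernel k) {r : ℝ} (hr : r ≤ 0) :
    volterraOp k G u r = 0 := by
  rw [volterraOp_eq_setIntegral_Ioc hk, Ioc_eq_empty (not_lt.2 hr), setIntegral_empty]

lemma norm_volterraOp_sub_le (hk : IsVolterraKernel k) (hG : IsDominatedBy G g)
    {ℓ : ℝ → ℝ≥0} (hℓ : Continuous ℓ) (hlip : ∀ s, 0 < s → LipschitzWith (ℓ s) (G s))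
    (hu : Continuous u) (hu' : Continuous u') {r : ℝ} (hr : 0 ≤ r) :
    ‖volterraOp k G u r - volterraOp k G u' r‖ ≤ ∫ s in 0..r, ℓ s * ‖u s - u' s‖ := by
  have hint {u : ℝ → E} (hu : Continuous u) :
      IntegrableOn (fun s => k r s • G s (u s)) (Ioc 0 r) :=
    (integrableOn_kernel_smul hk hG hu r).mono_set Ioc_subset_Ioi_self
  rw [volterraOp_eq_setIntegral_Ioc hk, volterraOp_eq_setIntegral_Ioc hk,
    ← integral_sub (hint hu) (hint hu'), ← intervalIntegral.integral_of_le hr]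
  refine intervalIntegral.norm_integral_le_of_norm_le hr (ae_of_all _ fun s hs => ?_)
    (Continuous.intervalIntegrable (by fun_prop) _ _)
  rw [← smul_sub, norm_smul]
  exact (mul_le_of_le_one_left (norm_nonneg _) (hk.abs_le_one r s hs.1)).trans
    ((hlip s hs.1).norm_sub_le _ _)

/-- The weight `exp (2 ∫₀^r ℓ)`, constant on `r ≤ 0`. In the supremum norm weighted by its inverse,
a Volterra operator whose nonlinearity has Lipschitz constant `ℓ s` is a contraction. -/
noncomputable def bieleckiWeight (ℓ : ℝ → ℝ≥0) (r : ℝ) : ℝ :=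
  exp (2 * ∫ s in 0..max r 0, (ℓ s : ℝ))

variable {ℓ : ℝ → ℝ≥0}

lemma bieleckiWeight_pos (r : ℝ) : 0 < bieleckiWeight ℓ r :=
  exp_pos _

lemma one_le_bieleckiWeight (r : ℝ) : 1 ≤ bieleckiWeight ℓ r :=
  one_le_exp (mul_nonneg zero_le_two
    (intervalIntegral.integral_nonneg (le_max_right r 0) fun s _ => (ℓ s).coe_nonneg))

lemma continuous_bieleckiWeight (hℓ : Continuous ℓ) : Continuous (bieleckiWeight ℓ) := by
  have hprim : Continuous fun r => ∫ s in 0..r, (ℓ s : ℝ) :=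
    intervalIntegral.continuous_primitive
      (fun a b => Continuous.intervalIntegrable (by fun_prop) a b) 0
  exact Real.continuous_exp.comp
    ((hprim.comp (continuous_id.max continuous_const)).const_mul 2)

lemma integral_mul_bieleckiWeight (hℓ : Continuous ℓ) {r : ℝ} (hr : 0 ≤ r) :
    ∫ s in 0..r, ℓ s * bieleckiWeight ℓ s = (bieleckiWeight ℓ r - 1) / 2 := by
  have hℓ' : Continuous fun s => (ℓ s : ℝ) := by fun_prop
  set W : ℝ → ℝ := fun r => exp (2 * ∫ s in 0..r, (ℓ s : ℝ)) with hW
  have hW_eq {s : ℝ} (hs : 0 ≤ s) : bieleckiWeight ℓ s = W s := by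
    rw [bieleckiWeight, max_eq_left hs]
  have hderiv (s : ℝ) : HasDerivAt (fun s => W s / 2) (ℓ s * W s) s := by
    have hprim : HasDerivAt (fun r => ∫ t in 0..r, (ℓ t : ℝ)) (ℓ s) s :=
      (hℓ'.integral_hasStrictDerivAt 0 s).hasDerivAt
    exact ((hprim.const_mul 2).exp.div_const 2).congr_deriv (by simp only [hW]; ring)
  have hWcont : Continuous W :=
    continuous_iff_continuousAt.2 fun s => by simpa using (hderiv s).continuousAt.mul_const 2
  calc ∫ s in 0..r, ℓ s * bieleckiWeight ℓ s
      = ∫ s in 0..r, ℓ s * W s := intervalIntegral.integral_congr fun s hs => by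
        rw [uIcc_of_le hr] at hs
        simp only [hW_eq hs.1]
    _ = W r / 2 - W 0 / 2 := intervalIntegral.integral_eq_sub_of_hasDerivAt
        (fun s _ => hderiv s) (Continuous.intervalIntegrable (by fun_prop) _ _)
    _ = (bieleckiWeight ℓ r - 1) / 2 := by
        rw [hW_eq hr, show W 0 = 1 by simp [hW], sub_div]

lemma continuous_bieleckiWeight_smul (hℓ : Continuous ℓ) (w : ℝ →ᵇ E) :
    Continuous fun s => bieleckiWeight ℓ s • w s :=
  (continuous_bieleckiWeight hℓ).smul w.continuous

/-- The map `u ↦ b + volterraOp k G u` in terms of the bounded function `w = u / bieleckiWeight ℓ`;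
its fixed points are the weighted solutions of `u = b + volterraOp k G u`. -/
noncomputable def weightedVolterraMap (hk : IsVolterraKernel k) (hG : IsDominatedBy G g)
    (hℓ : Continuous ℓ) (b : E) (w : ℝ →ᵇ E) : ℝ →ᵇ E :=
  .ofNormedAddCommGroup
    (fun r => (bieleckiWeight ℓ r)⁻¹ • (b + volterraOp k G (fun s => bieleckiWeight ℓ s • w s) r))
    (((continuous_bieleckiWeight hℓ).inv₀ fun r => (bieleckiWeight_pos r).ne').smul
      (continuous_const.add
        (continuous_volterraOp hk hG (continuous_bieleckiWeight_smul hℓ w))))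
    (‖b‖ + ∫ s in Ioi 0, g s)
    fun r => by
      rw [norm_smul, norm_inv, norm_of_nonneg (bieleckiWeight_pos r).le]
      refine (mul_le_of_le_one_left (norm_nonneg _)
        (inv_le_one_of_one_le₀ (one_le_bieleckiWeight r))).trans ?_
      exact (norm_add_le _ _).trans (add_le_add_right (norm_volterraOp_le hk hG r) _)

lemma weightedVolterraMap_apply (hk : IsVolterraKernel k) (hG : IsDominatedBy G g)
    (hℓ : Continuous ℓ) (b : E) (w : ℝ →ᵇ E) (r : ℝ) :
    weightedVolterraMap hk hG hℓ b w r =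
      (bieleckiWeight ℓ r)⁻¹ • (b + volterraOp k G (fun s => bieleckiWeight ℓ s • w s) r) :=
  rfl

lemma norm_volterraOp_bieleckiWeight_smul_sub_le (hk : IsVolterraKernel k)
    (hG : IsDominatedBy G g) (hℓ : Continuous ℓ)
    (hlip : ∀ s, 0 < s → LipschitzWith (ℓ s) (G s)) (w w' : ℝ →ᵇ E) (r : ℝ) :
    ‖volterraOp k G (fun s => bieleckiWeight ℓ s • w s) r -
        volterraOp k G (fun s => bieleckiWeight ℓ s • w' s) r‖ ≤
      bieleckiWeight ℓ r * (dist w w' / 2) := by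
  have hW := continuous_bieleckiWeight hℓ
  rcases le_total r 0 with hr | hr
  · rw [volterraOp_of_nonpos hk hr, volterraOp_of_nonpos hk hr, sub_self, norm_zero]
    exact mul_nonneg (bieleckiWeight_pos r).le (by positivity)
  calc _ ≤ ∫ s in 0..r, ℓ s * ‖bieleckiWeight ℓ s • w s - bieleckiWeight ℓ s • w' s‖ :=
        norm_volterraOp_sub_le hk hG hℓ hlip (continuous_bieleckiWeight_smul hℓ w)
          (continuous_bieleckiWeight_smul hℓ w') hr
    _ ≤ ∫ s in 0..r, ℓ s * bieleckiWeight ℓ s * dist w w' := by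
        refine intervalIntegral.integral_mono_on hr
          (Continuous.intervalIntegrable (by fun_prop) _ _)
          (Continuous.intervalIntegrable (by fun_prop) _ _) fun s _ => ?_
        rw [← smul_sub, norm_smul, norm_of_nonneg (bieleckiWeight_pos s).le, ← mul_assoc,
          ← dist_eq_norm]
        exact mul_le_mul_of_nonneg_left (w.dist_coe_le_dist s)
          (mul_nonneg (ℓ s).coe_nonneg (bieleckiWeight_pos s).le)
    _ = (bieleckiWeight ℓ r - 1) * (dist w w' / 2) := by
        rw [intervalIntegral.integral_mul_const, integral_mul_bieleckiWeight hℓ hr]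
        ring
    _ ≤ bieleckiWeight ℓ r * (dist w w' / 2) := by
        gcongr
        linarith

lemma contractingWith_weightedVolterraMap (hk : IsVolterraKernel k) (hG : IsDominatedBy G g)
    (hℓ : Continuous ℓ) (hlip : ∀ s, 0 < s → LipschitzWith (ℓ s) (G s)) (b : E) :
    ContractingWith (1 / 2) (weightedVolterraMap hk hG hℓ b) := by
  refine ⟨by norm_num, LipschitzWith.of_dist_le_mul fun w w' => ?_⟩
  refine (BoundedContinuousFunction.dist_le (by positivity)).2 fun r => ?_
  rw [weightedVolterraMap_apply, weightedVolterraMap_apply, dist_eq_norm, ← smul_sub,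
    add_sub_add_left_eq_sub, norm_smul, norm_inv, norm_of_nonneg (bieleckiWeight_pos r).le,
    inv_mul_le_iff₀ (bieleckiWeight_pos r)]
  refine (norm_volterraOp_bieleckiWeight_smul_sub_le hk hG hℓ hlip w w' r).trans_eq ?_
  push_cast
  ring

lemma dist_weightedVolterraMap_le (hk : IsVolterraKernel k) (hG : IsDominatedBy G g)
    (hℓ : Continuous ℓ) (b b' : E) (w : ℝ →ᵇ E) :
    dist (weightedVolterraMap hk hG hℓ b w) (weightedVolterraMap hk hG hℓ b' w) ≤ dist b b' := by
  refine (BoundedContinuousFunction.dist_le dist_nonneg).2 fun r => ?_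
  rw [weightedVolterraMap_apply, weightedVolterraMap_apply, dist_eq_norm, ← smul_sub,
    add_sub_add_right_eq_sub, norm_smul, norm_inv, norm_of_nonneg (bieleckiWeight_pos r).le,
    ← dist_eq_norm]
  exact mul_le_of_le_one_left dist_nonneg (inv_le_one_of_one_le₀ (one_le_bieleckiWeight r))

theorem exists_continuous_family_volterraOp_solution [CompleteSpace E] (hk : IsVolterraKernel k)
    (hG : IsDominatedBy G g) (hℓ : Continuous ℓ)
    (hlip : ∀ s, 0 < s → LipschitzWith (ℓ s) (G s)) :
    ∃ u : E → ℝ → E, (∀ b, Continuous (u b)) ∧ (∀ r, Continuous fun b => u b r) ∧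
      ∀ b r, u b r = b + volterraOp k G (u b) r := by
  have hT := contractingWith_weightedVolterraMap hk hG hℓ hlip
  set w : E → ℝ →ᵇ E := fun b => ContractingWith.fixedPoint _ (hT b)
  have hw : Continuous w := by
    refine (LipschitzWith.of_dist_le_mul (K := 2) fun b b' => ?_).continuous
    refine (ContractingWith.fixedPoint_lipschitz_in_map (hT b) (hT b')
      (dist_weightedVolterraMap_le hk hG hℓ b b')).trans_eq ?_
    push_cast
    ring
  refine ⟨fun b s => bieleckiWeight ℓ s • w b s, fun b => continuous_bieleckiWeight_smul hℓ (w b),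
    fun r => ?_, fun b r => ?_⟩
  · exact ((continuous_eval_const r).comp hw).const_smul _
  · rw [← smul_inv_smul₀ (bieleckiWeight_pos (ℓ := ℓ) r).ne' (b + _),
      ← weightedVolterraMap_apply hk hG hℓ, (hT b).fixedPoint_isFixedPt.eq]

end VolterraOp

theorem exists_continuous_eq_integral_one_sub_kernel_mul {k G : ℝ → ℝ → ℝ} {g : ℝ → ℝ}
    {ℓ : ℝ → ℝ≥0} (hk : IsVolterraKernel k) (hG : IsDominatedBy G g)
    (hG_nonneg : ∀ s, 0 < s → ∀ t, 0 ≤ G s t)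
    (hℓ : Continuous ℓ) (hlip : ∀ s, 0 < s → LipschitzWith (ℓ s) (G s)) :
    ∃ u : ℝ → ℝ, Continuous u ∧ ∀ r, u r = ∫ s in Ioi 0, (1 - k r s) * G s (u s) := by
  obtain ⟨u, hu_cont, hu_param, hu⟩ :=
    exists_continuous_family_volterraOp_solution hk.neg hG hℓ hlip
  set Φ : ℝ → ℝ := fun b => ∫ s in Ioi 0, G s (u b s) with hΦ
  have hΦ_cont : Continuous Φ := continuous_of_dominated
    (fun b => (hG.integrableOn_comp (hu_cont b)).aestronglyMeasurable)
    (fun b => ae_restrict_of_forall_mem measurableSet_Ioi fun s hs => hG.norm_le s hs _)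
    hG.integrableOn
    (ae_of_all _ fun s => hG.continuous.comp₂ continuous_const (hu_param s))
  have hΦ_nonneg (b : ℝ) : 0 ≤ Φ b :=
    setIntegral_nonneg measurableSet_Ioi fun s hs => hG_nonneg s hs _
  have hΦ_le (b : ℝ) : Φ b ≤ ∫ s in Ioi 0, g s :=
    setIntegral_mono_on (hG.integrableOn_comp (hu_cont b)) hG.integrableOn measurableSet_Ioi
      fun s hs => (le_abs_self _).trans (hG.norm_le s hs _)
  obtain ⟨b, hb⟩ : ∃ b, Φ b = b := by
    obtain ⟨b, -, hb⟩ := exists_mem_Icc_isFixedPt hΦ_cont.continuousOn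
      ((hΦ_nonneg 0).trans (hΦ_le 0)) (hΦ_nonneg 0) (hΦ_le _)
    exact ⟨b, hb⟩
  refine ⟨u b, hu_cont b, fun r => ?_⟩
  calc u b r = Φ b + ∫ s in Ioi 0, (-k) r s • G s (u b s) := by rw [hb]; exact hu b r
    _ = ∫ s in Ioi 0, (1 - k r s) * G s (u b s) := by
      rw [hΦ, ← integral_add (hG.integrableOn_comp (hu_cont b))
        (integrableOn_kernel_smul hk.neg hG (hu_cont b) r)]
      refine integral_congr_ae (ae_of_all _ fun s => ?_)
      simp only [Pi.neg_apply, smul_eq_mul]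
      ring

/-! ### The radial equation -/

section RadialProfile

lemma isVolterraKernel_radialKernel : IsVolterraKernel radialKernel where
  measurable r := by unfold radialKernel; fun_prop
  continuous s hs := by
    unfold radialKernel
    exact (Continuous.div (by fun_prop) (by fun_prop)
      fun r => (lt_max_of_lt_right hs).ne').pow 3
  abs_le_one r s hs := by
    have hden : 0 < max r s := lt_max_of_lt_right hs
    have hnum : max (r - s) 0 ≤ max r s := max_le_max (sub_le_self r hs.le) hs.le
    have hratio : 0 ≤ max (r - s) 0 / max r s := div_nonneg (le_max_right _ _) hden.le
    rw [radialKernel, abs_of_nonneg (pow_nonneg hratio 3)]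
    exact pow_le_one₀ hratio ((div_le_one hden).2 hnum)
  eq_zero r s _ hrs := by
    rw [radialKernel, max_eq_right (sub_nonpos.2 hrs), zero_div, zero_pow three_ne_zero]

lemma lipschitzOnWith_rpow_const_Ici {z m : ℝ} (hz : z ≤ 1) (hm : 0 < m) :
    LipschitzOnWith (‖z‖₊ * ‖m ^ (z - 1)‖₊) (fun t : ℝ => t ^ z) (Ici m) := by
  refine (convex_Ici m).lipschitzOnWith_of_nnnorm_hasDerivWithin_le
    (fun t ht => (Real.hasDerivAt_rpow_const
      (.inl (hm.trans_le (mem_Ici.1 ht)).ne')).hasDerivWithinAt) fun t ht => ?_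
  have ht_pos : 0 < t := hm.trans_le ht
  rw [nnnorm_mul]
  gcongr
  rw [← NNReal.coe_le_coe, coe_nnnorm, coe_nnnorm, norm_of_nonneg (rpow_nonneg ht_pos.le _),
    norm_of_nonneg (rpow_nonneg hm.le _)]
  exact rpow_le_rpow_of_nonpos hm ht (by linarith)

variable {q : ℝ} {p : ℝ → ℝ}

/-- The nonlinearity `s (p(s) + s² t / 6) ^ (-q)` of the radial equation in the unknown
`t = 6 w(s) / s²`. Only the positive part of `t` enters, which makes it Lipschitz in `t ∈ ℝ`; the
solution turns out to be nonnegative. -/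
noncomputable def profileSource (q : ℝ) (p : ℝ → ℝ) (s t : ℝ) : ℝ :=
  s * (p s + s ^ 2 / 6 * max t 0) ^ (-q)

lemma le_add_sq_div_six_mul_max (p : ℝ → ℝ) (s t : ℝ) : p s ≤ p s + s ^ 2 / 6 * max t 0 :=
  le_add_of_nonneg_right (by positivity)

lemma profileSource_nonneg (hp_pos : ∀ s, 0 < p s) {s : ℝ} (hs : 0 ≤ s) (t : ℝ) :
    0 ≤ profileSource q p s t :=
  mul_nonneg hs (rpow_nonneg ((hp_pos s).le.trans (le_add_sq_div_six_mul_max p s t)) _)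

lemma isDominatedBy_profileSource (hq : 0 ≤ q) (hp : Continuous p) (hp_pos : ∀ s, 0 < p s)
    (hint : IntegrableOn (fun s => s * p s ^ (-q)) (Ioi 0)) :
    IsDominatedBy (profileSource q p) fun s => s * p s ^ (-q) where
  continuous := by
    unfold profileSource uncurry
    refine continuous_fst.mul (Continuous.rpow_const (by fun_prop) fun x => .inl ?_)
    exact ((hp_pos x.1).trans_le (le_add_sq_div_six_mul_max p x.1 x.2)).ne'
  integrableOn := hint
  norm_le s hs t := by
    rw [norm_of_nonneg (profileSource_nonneg hp_pos hs.le t)]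
    exact mul_le_mul_of_nonneg_left (rpow_le_rpow_of_nonpos (hp_pos s)
      (le_add_sq_div_six_mul_max p s t) (neg_nonpos.2 hq)) hs.le

lemma lipschitzWith_profileSource (hq : 0 ≤ q) (hp_pos : ∀ s, 0 < p s) (s : ℝ) :
    LipschitzWith (‖s‖₊ * (‖-q‖₊ * ‖p s ^ (-q - 1)‖₊ * ‖s ^ 2 / 6‖₊)) (profileSource q p s) := by
  have hbase : LipschitzWith ‖s ^ 2 / 6‖₊ fun t : ℝ => p s + s ^ 2 / 6 * max t 0 :=
    LipschitzWith.of_dist_le_mul fun t t' => by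
      rw [dist_add_left, Real.dist_eq, ← mul_sub, abs_mul]
      exact mul_le_mul_of_nonneg_left (abs_max_sub_max_le_abs t t' 0) (abs_nonneg _)
  have hpow := (lipschitzOnWith_rpow_const_Ici (by linarith : -q ≤ 1) (hp_pos s)).comp
    hbase.lipschitzOnWith fun t (_ : t ∈ univ) => le_add_sq_div_six_mul_max p s t
  exact (lipschitzWith_smul s).comp (lipschitzOnWith_univ.1 hpow)

theorem exists_continuous_radial_profile (hq : 0 ≤ q) (hp : Continuous p) (hp_pos : ∀ s, 0 < p s)
    (hint : IntegrableOn (fun s => s * p s ^ (-q)) (Ioi 0)) :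
    ∃ w : ℝ → ℝ, Continuous w ∧ (∀ r, 0 ≤ w r) ∧ ∀ r,
      w r = r ^ 2 / 6 * ∫ s in Ioi 0, (1 - radialKernel r s) * (s * (p s + w s) ^ (-q)) := by
  have hk := isVolterraKernel_radialKernel
  obtain ⟨u, hu_cont, hu⟩ := exists_continuous_eq_integral_one_sub_kernel_mul hk
    (isDominatedBy_profileSource hq hp hp_pos hint)
    (fun s hs => profileSource_nonneg hp_pos hs.le)
    (by
      have hpow : Continuous fun s => p s ^ (-q - 1) :=
        hp.rpow_const fun s => .inl (hp_pos s).ne'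
      fun_prop)
    fun s _ => lipschitzWith_profileSource hq hp_pos s
  have hu_nonneg (r : ℝ) : 0 ≤ u r := by
    rw [hu]
    exact setIntegral_nonneg measurableSet_Ioi fun s hs => mul_nonneg
      (sub_nonneg.2 (le_of_abs_le (hk.abs_le_one r s hs))) (profileSource_nonneg hp_pos hs.le _)
  refine ⟨fun r => r ^ 2 / 6 * u r, by fun_prop, fun r => mul_nonneg (by positivity) (hu_nonneg r),
    fun r => ?_⟩
  simp only [hu r, profileSource, max_eq_left (hu_nonneg _)]

end RadialProfile

section Radial

lemma integrableOn_Ioi_pow_mul_of_le {g : ℝ → ℝ} {m n : ℕ} (hg : Continuous g) (hmn : m ≤ n)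
    (hint : IntegrableOn (fun s => s ^ n * g s) (Ioi 0)) :
    IntegrableOn (fun s => s ^ m * g s) (Ioi 0) := by
  have hcont : Continuous fun s => s ^ m * g s := by fun_prop
  rw [← Ioc_union_Ioi_eq_Ioi zero_le_one]
  refine hcont.integrableOn_Ioc.union (Integrable.mono
    (hint.mono_set (Ioi_subset_Ioi zero_le_one)) hcont.aestronglyMeasurable ?_)
  refine ae_restrict_of_forall_mem measurableSet_Ioi fun s (hs : 1 < s) => ?_
  have hs_pos : 0 < s := zero_lt_one.trans hs
  rw [norm_mul, norm_mul, norm_pow, norm_pow, norm_of_nonneg hs_pos.le]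
  gcongr
  exact hs.le

lemma exists_continuous_eq_comp_norm {E β : Type*} [NormedAddCommGroup E] [NormedSpace ℝ E]
    [Nontrivial E] [TopologicalSpace β] {P : E → β} (hP : Continuous P)
    (hrad : ∀ x y, ‖x‖ = ‖y‖ → P x = P y) :
    ∃ p : ℝ → β, Continuous p ∧ range p ⊆ range P ∧ ∀ x, P x = p ‖x‖ := by
  obtain ⟨e, he⟩ := exists_norm_eq E zero_le_one
  refine ⟨fun s => P (s • e), by fun_prop, range_subset_iff.2 fun s => mem_range_self _,
    fun x => hrad _ _ ?_⟩
  rw [norm_smul, he, mul_one, norm_norm]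

lemma integrable_mul_add_rpow_neg {α : Type*} [MeasurableSpace α] {μ : Measure α} {q : ℝ}
    {h P v : α → ℝ} (hq : 0 ≤ q) (hP : ∀ x, 0 < P x) (hv : ∀ x, 0 ≤ v x)
    (hh_meas : Measurable h) (hP_meas : Measurable P) (hv_meas : Measurable v)
    (hint : Integrable (fun x => h x * P x ^ (-q)) μ) :
    Integrable (fun x => h x * (P x + v x) ^ (-q)) μ := by
  refine hint.mono (Measurable.aestronglyMeasurable (by fun_prop)) (ae_of_all _ fun x => ?_)
  have hPv : P x ≤ P x + v x := le_add_of_nonneg_right (hv x)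
  rw [norm_mul, norm_mul, norm_of_nonneg (rpow_nonneg ((hP x).le.trans hPv) _),
    norm_of_nonneg (rpow_nonneg (hP x).le _)]
  exact mul_le_mul_of_nonneg_left (rpow_le_rpow_of_nonpos (hP x) hPv (neg_nonpos.2 hq))
    (norm_nonneg _)

variable {E : Type*} [NormedAddCommGroup E] [InnerProductSpace ℝ E] [FiniteDimensional ℝ E]
  [MeasurableSpace E] [BorelSpace E]

lemma integrable_comp_norm_iff_of_finrank_eq_three (hE : finrank ℝ E = 3) {f : ℝ → ℝ} :
    Integrable (fun y : E => f ‖y‖) ↔ IntegrableOn (fun s => s ^ 2 * f s) (Ioi 0) := by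
  have : Nontrivial E := nontrivial_of_finrank_pos (R := ℝ) (by omega)
  rw [integrable_fun_norm_addHaar, hE]
  rfl

lemma integrable_comp_norm_of_integrable_norm_mul (hE : finrank ℝ E = 3) {f : ℝ → ℝ}
    (hf : Continuous f) (hint : Integrable fun y : E => ‖y‖ * f ‖y‖) :
    Integrable fun y : E => f ‖y‖ := by
  rw [integrable_comp_norm_iff_of_finrank_eq_three hE (f := fun s => s * f s)] at hint
  refine (integrable_comp_norm_iff_of_finrank_eq_three hE).2
    (integrableOn_Ioi_pow_mul_of_le hf (Nat.le_succ 2) ?_)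
  simpa only [pow_succ, mul_assoc] using hint

theorem exists_radial_eq_distPotential (hE : finrank ℝ E = 3) {q : ℝ} (hq : 0 ≤ q) {p : ℝ → ℝ}
    (hp : Continuous p) (hp_pos : ∀ s, 0 < p s) (hint : Integrable fun y : E => p ‖y‖ ^ (-q)) :
    ∃ w : ℝ → ℝ, Continuous w ∧ (∀ r, 0 ≤ w r) ∧ ∀ x : E,
      w ‖x‖ = (8 * π)⁻¹ * distPotential volume (fun y => (p ‖y‖ + w ‖y‖) ^ (-q)) x := by
  have hint_Ioi : IntegrableOn (fun s => s * p s ^ (-q)) (Ioi 0) := by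
    simpa only [pow_one] using integrableOn_Ioi_pow_mul_of_le
      (hp.rpow_const fun s => .inl (hp_pos s).ne') one_le_two
      ((integrable_comp_norm_iff_of_finrank_eq_three hE (f := fun s => p s ^ (-q))).1 hint)
  obtain ⟨w, hw, hw_nonneg, hw_eq⟩ := exists_continuous_radial_profile hq hp hp_pos hint_Ioi
  have hpw : Continuous fun s => (p s + w s) ^ (-q) := (hp.add hw).rpow_const fun s =>
    .inl (add_pos_of_pos_of_nonneg (hp_pos s) (hw_nonneg s)).ne'
  have hint_w : Integrable fun y : E => (p ‖y‖ + w ‖y‖) ^ (-q) := by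
    simpa only [one_mul] using integrable_mul_add_rpow_neg (h := fun _ : E => 1) hq
      (fun y => hp_pos ‖y‖) (fun y => hw_nonneg ‖y‖)
      (by fun_prop) (by fun_prop) (by fun_prop) (by simpa only [one_mul] using hint)
  refine ⟨w, hw, hw_nonneg, fun x => ?_⟩
  rw [distPotential_comp_norm hE hpw.measurable hint_w, hw_eq]
  field_simp
  ring

end Radial

theorem exists_radial_solution_integral_equation_general {E : Type*} [NormedAddCommGroup E]
    [InnerProductSpace ℝ E] [FiniteDimensional ℝ E] [MeasurableSpace E] [BorelSpace E]
    (hE : finrank ℝ E = 3) {q : ℝ} (hq : 0 < q) {P : E → ℝ}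
    (hPcont : Continuous P) (hPpos : ∀ x, 0 < P x) (hPrad : ∀ x y, ‖x‖ = ‖y‖ → P x = P y)
    (hPint : Integrable fun x => ‖x‖ * (P x) ^ (-q)) :
    ∃ v : E → ℝ,
      Continuous v ∧
      (∀ x y, ‖x‖ = ‖y‖ → v x = v y) ∧
      (∃ C : ℝ, ∀ x, |v x| ≤ C * (1 + ‖x‖)) ∧
      v 0 = 0 ∧ (∀ x, 0 ≤ v x) ∧
      Integrable (fun y => (P y + v y) ^ (-q)) ∧
      (∀ x, Integrable (fun y => (‖x - y‖ - ‖y‖) * (P y + v y) ^ (-q))) ∧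
      (∀ x, v x = (8 * π)⁻¹ * ∫ y, (‖x - y‖ - ‖y‖) * (P y + v y) ^ (-q)) ∧
      Tendsto (fun x => v x / ‖x‖) (cocompact E)
        (𝓝 ((8 * π)⁻¹ * ∫ y, (P y + v y) ^ (-q))) := by
  have : Nontrivial E := nontrivial_of_finrank_pos (R := ℝ) (by omega)
  obtain ⟨p, hp, hp_range, hPp⟩ := exists_continuous_eq_comp_norm hPcont hPrad
  have hp_pos (s : ℝ) : 0 < p s := range_subset_iff.1 (hp_range.trans (range_subset_iff.2 hPpos)) s
  simp_rw [hPp] at hPint ⊢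
  obtain ⟨w, hw, hw_nonneg, hw_eq⟩ := exists_radial_eq_distPotential hE hq.le hp hp_pos
    (integrable_comp_norm_of_integrable_norm_mul hE
      (hp.rpow_const fun s => .inl (hp_pos s).ne') hPint)
  have hf : Continuous fun s => (p s + w s) ^ (-q) := (hp.add hw).rpow_const fun s =>
    .inl (add_pos_of_pos_of_nonneg (hp_pos s) (hw_nonneg s)).ne'
  have hf_moment : Integrable fun y : E => ‖y‖ * (p ‖y‖ + w ‖y‖) ^ (-q) :=
    integrable_mul_add_rpow_neg hq.le (fun y => hp_pos ‖y‖) (fun y => hw_nonneg ‖y‖)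
      (by fun_prop) (by fun_prop) (by fun_prop) hPint
  have hf_int := integrable_comp_norm_of_integrable_norm_mul hE hf hf_moment
  refine ⟨fun x => w ‖x‖, by fun_prop, fun x y hxy => congrArg w hxy, ?_, ?_,
    fun x => hw_nonneg _, hf_int, integrable_norm_sub_sub_norm_mul hf_int, hw_eq, ?_⟩
  · refine ⟨(8 * π)⁻¹ * ∫ y : E, |(p ‖y‖ + w ‖y‖) ^ (-q)|, fun x => ?_⟩
    dsimp only
    rw [hw_eq x, abs_mul, abs_of_pos (by positivity), mul_assoc]
    gcongr
    exact (abs_distPotential_le hf_int x).trans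
      (mul_le_mul_of_nonneg_left (by linarith) (by positivity))
  · exact (hw_eq 0).trans (by simp [distPotential])
  · refine ((tendsto_distPotential_div_norm hf_int hf_moment).const_mul _).congr fun x => ?_
    dsimp only
    rw [hw_eq x, mul_div_assoc]

/-- **Proposition.** If `P : ℝ³ → (0,∞)` is continuous, radially symmetric, with
`∫ |x| P(x)^{-q} dx < ∞` for some `q > 0`, then there is a continuous radially symmetric
function `v` of at most linear growth with `min v = v(0) = 0` solving
`v(x) = (8π)⁻¹ ∫ (|x−y| − |y|)(P(y)+v(y))^{-q} dy`, and
`v(x)/|x| → (8π)⁻¹ ∫ (P(y)+v(y))^{-q} dy` as `|x| → ∞`. -/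
theorem exists_radial_solution_integral_equation
    (q : ℝ) (hq : 0 < q) (P : EuclideanSpace ℝ (Fin 3) → ℝ)
    (hPcont : Continuous P) (hPpos : ∀ x, 0 < P x)
    (hPrad : ∀ x y, ‖x‖ = ‖y‖ → P x = P y)
    (hPint : Integrable (fun x => ‖x‖ * (P x) ^ (-q))) :
    ∃ v : EuclideanSpace ℝ (Fin 3) → ℝ,
      Continuous v ∧
      (∀ x y, ‖x‖ = ‖y‖ → v x = v y) ∧
      (∃ C : ℝ, ∀ x, |v x| ≤ C * (1 + ‖x‖)) ∧
      v 0 = 0 ∧ (∀ x, 0 ≤ v x) ∧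
      Integrable (fun y => (P y + v y) ^ (-q)) ∧
      (∀ x, Integrable (fun y => (‖x - y‖ - ‖y‖) * (P y + v y) ^ (-q))) ∧
      (∀ x, v x = (8 * π)⁻¹ * ∫ y, (‖x - y‖ - ‖y‖) * (P y + v y) ^ (-q)) ∧
      Tendsto (fun x => v x / ‖x‖) (cocompact (EuclideanSpace ℝ (Fin 3)))
        (𝓝 ((8 * π)⁻¹ * ∫ y, (P y + v y) ^ (-q))) :=
  exists_radial_solution_integral_equation_general finrank_euclideanSpace_fin hq hPcont hPpos
    hPrad hPint
end

section
/- Let g : ℝ³ → (0, ∞) be a continuous function with g(−x) = g(x) for all x and ∫_{ℝ³}(1+|y|) g(y) dy < ∞. Define v(x) := (1/8π)∫_{ℝ³} (|x−y| − |y|) g(y) dy. Then v is twice continuously differentiable, its Hessian D²v(x) is positive definite at every x ∈ ℝ³ (so v is strictly convex), ∇v(0) = 0, and consequently v(x) ≥ v(0) = 0 for all x ∈ ℝ³, with the minimum of v attained exactly at 0. -/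
open MeasureTheory Filter Topology Real
open ContinuousLinearMap (lsmul)
open scoped Convolution

/-!
The Hessian of `z ↦ ‖z‖` at `z ≠ 0` is `‖z‖⁻¹` times the orthogonal projection onto `zᗮ`. In
dimension at least two it is locally integrable and bounded off the unit ball, so it may be
integrated against a continuous integrable density, and the potential is `C²` with Hessian the
convolution of the two. In the direction `w` the kernel `D²‖·‖(x - y)` degenerates only when
`x - y` lies on the line spanned by `w`, a null set of `y`; hence the Hessian is positive definite
and the potential strictly convex. An even strictly convex function is smallest at the origin,
since `0` is the midpoint of `x` and `-x`.
-/

section Convexity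

variable {V W : Type*} [NormedAddCommGroup V] [NormedSpace ℝ V]
  [NormedAddCommGroup W] [NormedSpace ℝ W] {f : V → ℝ}

lemma deriv_deriv_comp_add_smul (hf : ContDiff ℝ 2 f) (x w : V) (t : ℝ) :
    deriv (deriv fun s : ℝ => f (x + s • w)) t = iteratedFDeriv ℝ 2 f (x + t • w) ![w, w] := by
  have hline (s : ℝ) : HasDerivAt (fun s : ℝ => x + s • w) w s := by
    simpa using ((hasDerivAt_id s).smul_const w).const_add x
  have hfirst : deriv (fun s : ℝ => f (x + s • w)) = fun s => fderiv ℝ f (x + s • w) w :=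
    funext fun s =>
      ((hf.differentiable two_ne_zero _).hasFDerivAt.comp_hasDerivAt s (hline s)).deriv
  have hf' : Differentiable ℝ (fderiv ℝ f) :=
    (hf.fderiv_right (m := 1) (by norm_num)).differentiable one_ne_zero
  rw [hfirst, iteratedFDeriv_two_apply]
  exact (((hf' _).hasFDerivAt.comp_hasDerivAt t (hline t)).clm_apply
    (hasDerivAt_const t w)).deriv.trans (by simp)

theorem strictConvexOn_univ_of_iteratedFDeriv_two_pos (hf : ContDiff ℝ 2 f)
    (hpos : ∀ x w, w ≠ 0 → 0 < iteratedFDeriv ℝ 2 f x ![w, w]) :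
    StrictConvexOn ℝ Set.univ f := by
  refine ⟨convex_univ, fun x _ y _ hxy a b ha hb hab => ?_⟩
  have hline : StrictConvexOn ℝ Set.univ fun s : ℝ => f (x + s • (y - x)) :=
    strictConvexOn_univ_of_deriv2_pos (hf.continuous.comp (by fun_prop)) fun t =>
      (hpos _ _ (sub_ne_zero.2 hxy.symm)).trans_eq (deriv_deriv_comp_add_smul hf x _ t).symm
  have hconv := hline.2 (Set.mem_univ 0) (Set.mem_univ 1) zero_ne_one ha hb hab
  have hpoint : x + (a • (0 : ℝ) + b • 1) • (y - x) = a • x + b • y := by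
    obtain rfl : a = 1 - b := by linarith
    simp only [smul_eq_mul, mul_zero, mul_one, zero_add]
    module
  simp only [hpoint, zero_smul, one_smul, add_zero, add_sub_cancel] at hconv
  exact hconv

lemma fderiv_zero_of_even {f : V → W} (hf : f.Even) : fderiv ℝ f 0 = 0 := by
  have h := fderiv_comp_smul (𝕜 := ℝ) (f := f) (x := 0) (-1 : ℝ)
  simp only [neg_smul, one_smul, hf _, neg_zero] at h
  have := IsAddTorsionFree.of_isTorsionFree ℝ (V →L[ℝ] W)
  exact self_eq_neg.1 h

lemma lt_of_strictConvexOn_of_even (hconv : StrictConvexOn ℝ Set.univ f) (hf : f.Even)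
    {x : V} (hx : x ≠ 0) : f 0 < f x := by
  have := IsAddTorsionFree.of_isTorsionFree ℝ V
  have hmid := hconv.2 (Set.mem_univ x) (Set.mem_univ (-x)) (self_ne_neg.2 hx)
    one_half_pos one_half_pos (add_halves 1)
  rwa [smul_neg, add_neg_cancel, hf x, ← add_smul, add_halves, one_smul] at hmid

lemma contDiff_two_of_hasFDerivAt {f : V → W} {f' : V → V →L[ℝ] W} {f'' : V → V →L[ℝ] V →L[ℝ] W}
    (hf : ∀ x, HasFDerivAt f (f' x) x) (hf' : ∀ x, HasFDerivAt f' (f'' x) x)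
    (hf'' : Continuous f'') : ContDiff ℝ 2 f :=
  contDiff_succ_iff_hasFDerivAt (n := 1).2
    ⟨f', contDiff_one_iff_hasFDerivAt.2 ⟨f'', hf'', hf'⟩, hf⟩

end Convexity

section Kernel

variable {V : Type*} [NormedAddCommGroup V] [NormedSpace ℝ V]

lemma norm_normalize_le_one (x : V) : ‖NormedSpace.normalize x‖ ≤ 1 := by
  rw [NormedSpace.normalize, norm_smul, norm_inv, norm_norm]
  exact inv_mul_le_one

lemma norm_normalize_sub_normalize_le (x : V) {y : V} (hy : y ≠ 0) :
    ‖NormedSpace.normalize x - NormedSpace.normalize y‖ ≤ 2 * ‖y‖⁻¹ * ‖x - y‖ := by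
  have hsplit : ‖y‖ • (NormedSpace.normalize x - NormedSpace.normalize y) =
      (‖y‖ - ‖x‖) • NormedSpace.normalize x + (x - y) := by
    rw [smul_sub, sub_smul, NormedSpace.norm_smul_normalize, NormedSpace.norm_smul_normalize]
    abel
  have hbound : ‖NormedSpace.normalize x - NormedSpace.normalize y‖ * ‖y‖ ≤ 2 * ‖x - y‖ := calc
    _ = ‖(‖y‖ - ‖x‖) • NormedSpace.normalize x + (x - y)‖ := by
      rw [← hsplit, norm_smul, norm_norm, mul_comm]
    _ ≤ |‖y‖ - ‖x‖| * ‖NormedSpace.normalize x‖ + ‖x - y‖ := by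
      simpa only [norm_smul, Real.norm_eq_abs] using
        norm_add_le ((‖y‖ - ‖x‖) • NormedSpace.normalize x) (x - y)
    _ ≤ ‖x - y‖ * 1 + ‖x - y‖ := by
      gcongr
      · exact (abs_norm_sub_norm_le y x).trans_eq (norm_sub_rev y x)
      · exact norm_normalize_le_one x
    _ = 2 * ‖x - y‖ := by ring
  rwa [mul_right_comm, ← div_eq_mul_inv, le_div_iff₀ (norm_pos_iff.2 hy)]

variable {E : Type*} [NormedAddCommGroup E] [InnerProductSpace ℝ E]

lemma hasFDerivAt_norm {z : E} (hz : z ≠ 0) :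
    HasFDerivAt (fun x : E => ‖x‖) (innerSL ℝ (NormedSpace.normalize z)) z := by
  have h := (hasStrictFDerivAt_norm_sq z).hasFDerivAt.sqrt (by positivity)
  simp only [Real.sqrt_sq (norm_nonneg _)] at h
  refine h.congr_fderiv (ContinuousLinearMap.ext fun w => ?_)
  simp only [one_div, mul_inv_rev, smul_apply, coe_innerSL_apply, nsmul_eq_mul, Nat.cast_ofNat,
    smul_eq_mul, NormedSpace.normalize, map_smul]
  field_simp

/-- The derivative of `normalize` away from the origin, that is, the Hessian of the norm read as an
endomorphism. Since `‖0‖⁻¹ = 0`, it vanishes at the origin. -/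
noncomputable def fderivNormalize (z : E) : E →L[ℝ] E := ‖z‖⁻¹ • (ℝ ∙ z)ᗮ.starProjection

lemma fderivNormalize_eq (z : E) :
    fderivNormalize z =
      ‖z‖⁻¹ • (ContinuousLinearMap.id ℝ E - (‖z‖ ^ 2)⁻¹ • InnerProductSpace.rankOne ℝ z z) := by
  ext w
  simp [fderivNormalize, Submodule.starProjection_orthogonal, Submodule.starProjection_singleton,
    div_eq_inv_mul, mul_smul]

lemma hasFDerivAt_normalize {z : E} (hz : z ≠ 0) :
    HasFDerivAt (NormedSpace.normalize : E → E) (fderivNormalize z) z := by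
  have hz' : ‖z‖ ≠ 0 := norm_ne_zero_iff.2 hz
  have h := ((hasDerivAt_inv hz').comp_hasFDerivAt z (hasFDerivAt_norm hz)).smul (hasFDerivAt_id z)
  refine h.congr_fderiv (ContinuousLinearMap.ext fun w => ?_)
  simp only [Function.comp_apply, NormedSpace.normalize, map_smul, neg_smul, id_eq, add_apply,
    smul_apply, ContinuousLinearMap.id_apply, ContinuousLinearMap.smulRight_apply, neg_apply,
    coe_innerSL_apply, smul_eq_mul, fderivNormalize_eq, sub_apply, InnerProductSpace.rankOne_apply]
  match_scalars <;> field_simp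

lemma norm_fderivNormalize_le (z : E) : ‖fderivNormalize z‖ ≤ ‖z‖⁻¹ := by
  rw [fderivNormalize, norm_smul, norm_inv, norm_norm]
  exact mul_le_of_le_one_right (by positivity) (Submodule.starProjection_norm_le _)

lemma norm_fderivNormalize_le_one {z : E} (hz : 1 ≤ ‖z‖) : ‖fderivNormalize z‖ ≤ 1 :=
  (norm_fderivNormalize_le z).trans (inv_le_one_of_one_le₀ hz)

lemma inner_fderivNormalize_self_pos {z w : E} (hw : w ≠ 0) (hz : z ∉ ℝ ∙ w) :
    0 < inner ℝ w (fderivNormalize z w) := by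
  have hz0 : z ≠ 0 := fun h => hz (h ▸ Submodule.zero_mem _)
  have hwz : w ∉ ℝ ∙ z := fun h => by
    obtain ⟨a, rfl⟩ := Submodule.mem_span_singleton.1 h
    exact hz (Submodule.mem_span_singleton.2 ⟨a⁻¹, inv_smul_smul₀ (left_ne_zero_of_smul hw) z⟩)
  have hproj : (ℝ ∙ z)ᗮ.orthogonalProjectionOnto w ≠ 0 := by
    rwa [Ne, Submodule.orthogonalProjectionOnto_eq_zero_iff, Submodule.orthogonal_orthogonal]
  rw [real_inner_comm, fderivNormalize, smul_apply, real_inner_smul_left]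
  refine mul_pos (inv_pos.2 (norm_pos_iff.2 hz0)) ?_
  rw [← RCLike.re_to_real (x := inner ℝ _ _), Submodule.re_inner_starProjection_eq_normSq]
  exact pow_pos (norm_pos_iff.2 hproj) 2

lemma continuousOn_fderivNormalize : ContinuousOn (fderivNormalize : E → E →L[ℝ] E) {0}ᶜ := by
  have hnorm : ContinuousOn (fun z : E => ‖z‖) {0}ᶜ := continuous_norm.continuousOn
  have hrankOne : Continuous fun z : E => InnerProductSpace.rankOne ℝ z z :=
    (InnerProductSpace.rankOne ℝ).continuous.clm_apply continuous_id
  rw [funext fderivNormalize_eq]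
  exact (hnorm.inv₀ fun z hz => norm_ne_zero_iff.2 hz).smul (continuousOn_const.sub
    (((hnorm.pow 2).inv₀ fun z hz => pow_ne_zero 2 (norm_ne_zero_iff.2 hz)).smul
      hrankOne.continuousOn))

end Kernel

section AlmostEverywhere

lemma aestronglyMeasurable_of_continuousOn_compl_singleton {X Y : Type*} [TopologicalSpace X]
    [T1Space X] [MeasurableSpace X] [OpensMeasurableSpace X] [TopologicalSpace Y]
    [SecondCountableTopologyEither X Y] [TopologicalSpace.PseudoMetrizableSpace Y] {μ : Measure X}
    [NullSingletonClass μ] {k : X → Y} {a : X} (hk : ContinuousOn k {a}ᶜ) :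
    AEStronglyMeasurable k μ := by
  rw [← restrict_compl_singleton (μ := μ) a]
  exact hk.aestronglyMeasurable (measurableSet_singleton a).compl

lemma ae_sub_notMem_submodule {G : Type*} [NormedAddCommGroup G] [NormedSpace ℝ G]
    [FiniteDimensional ℝ G] [MeasurableSpace G] [BorelSpace G] {μ : Measure G}
    [μ.IsAddHaarMeasure] {K : Submodule ℝ G} (hK : K ≠ ⊤) (x : G) : ∀ᵐ y ∂μ, x - y ∉ K :=
  (Measure.measurePreserving_sub_left μ x).quasiMeasurePreserving.ae
    (measure_eq_zero_iff_ae_notMem.1 (Measure.addHaar_submodule μ K hK))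

lemma span_singleton_ne_top {V : Type*} [AddCommGroup V] [Module ℝ V]
    (hdim : 1 < Module.finrank ℝ V) (w : V) : ℝ ∙ w ≠ ⊤ := fun h =>
  hdim.not_ge (finrank_le_one w fun _ => Submodule.mem_span_singleton.1 (h ▸ Submodule.mem_top))

lemma integral_mul_pos_of_ae_pos {X : Type*} [TopologicalSpace X] [MeasurableSpace X]
    [OpensMeasurableSpace X] {μ : Measure X} [μ.IsOpenPosMeasure] {g q : X → ℝ}
    (hg : Continuous g) (hg0 : ∀ y, 0 ≤ g y) (hgne : g ≠ 0) (hq : ∀ᵐ y ∂μ, 0 < q y)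
    (hint : Integrable (fun y => g y * q y) μ) : 0 < ∫ y, g y * q y ∂μ := by
  have hnonneg : 0 ≤ᵐ[μ] fun y => g y * q y := hq.mono fun y hy => mul_nonneg (hg0 y) hy.le
  rw [integral_pos_iff_support_of_nonneg_ae hnonneg hint]
  have hsupp : Function.support g ≤ᵐ[μ] Function.support fun y => g y * q y :=
    hq.mono fun y hy hgy => mul_ne_zero hgy hy.ne'
  exact (hg.isOpen_support.measure_pos μ (Function.support_nonempty_iff.2 hgne)).trans_le
    (measure_mono_ae hsupp)

end AlmostEverywhere

section Convolution

variable {G A B F : Type*} [NormedAddCommGroup G]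
  [NormedAddCommGroup A] [NormedSpace ℝ A] [NormedAddCommGroup B] [NormedSpace ℝ B]
  [NormedAddCommGroup F] [NormedSpace ℝ F] {f : G → A} {k : G → B} {C : ℝ}

lemma norm_convolution_integrand_le_of_eqOn_closedBall_zero (L : A →L[ℝ] B →L[ℝ] F) {x₀ x : G}
    (hf : Set.EqOn f 0 (Metric.closedBall x₀ 2)) (hk : ∀ z, 1 ≤ ‖z‖ → ‖k z‖ ≤ C)
    (hx : x ∈ Metric.ball x₀ 1) (y : G) : ‖L (f y) (k (x - y))‖ ≤ ‖L‖ * ‖f y‖ * C := by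
  by_cases hy : y ∈ Metric.closedBall x₀ 2
  · simp [hf hy]
  · refine (L.le_opNorm₂ _ _).trans ?_
    gcongr
    refine hk _ ?_
    rw [Metric.mem_closedBall, not_le] at hy
    rw [Metric.mem_ball] at hx
    rw [← dist_eq_norm]
    linarith [dist_triangle_left y x₀ x]

variable [MeasurableSpace G] {μ : Measure G}

lemma convolutionExistsAt_clm_comp {g : G → ℝ} {x : G} (T : B →L[ℝ] F)
    (h : ConvolutionExistsAt g k x (lsmul ℝ ℝ) μ) :
    ConvolutionExistsAt g (fun z => T (k z)) x (lsmul ℝ ℝ) μ := by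
  simpa [ConvolutionExistsAt] using T.integrable_comp h

lemma clm_apply_convolution [CompleteSpace B] [CompleteSpace F] {g : G → ℝ} {x : G}
    (T : B →L[ℝ] F) (h : ConvolutionExistsAt g k x (lsmul ℝ ℝ) μ) :
    T ((g ⋆[lsmul ℝ ℝ, μ] k) x) = (g ⋆[lsmul ℝ ℝ, μ] fun z => T (k z)) x := by
  rw [convolution_def, convolution_def, ← T.integral_comp_comm h.integrable]
  simp only [ContinuousLinearMap.lsmul_apply, map_smul]

variable [ProperSpace G] [BorelSpace G]

-- Cutting off `f` instead of `k` keeps the singularity of `k` against a continuous compactly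
-- supported factor, while `f₂` meets only values of `k` away from its singularity.
lemma exists_add_eqOn_closedBall_zero (hf : Continuous f) (hfint : Integrable f μ) (x : G) (r : ℝ) :
    ∃ f₁ f₂ : G → A, f₁ + f₂ = f ∧ Continuous f₁ ∧ HasCompactSupport f₁ ∧
      Integrable f₂ μ ∧ Set.EqOn f₂ 0 (Metric.closedBall x r) := by
  obtain ⟨χ, hχ_one, -, hχ_supp, hχ_mem⟩ := exists_continuous_one_zero_of_isCompact
    (isCompact_closedBall x r) isClosed_empty (Set.disjoint_empty _)
  refine ⟨fun y => χ y • f y, fun y => (1 - χ y) • f y, ?_, χ.continuous.smul hf,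
    hχ_supp.smul_right, ?_, fun y hy => ?_⟩
  · ext y
    simp only [Pi.add_apply, ← add_smul, add_sub_cancel, one_smul]
  · refine hfint.bdd_smul 1 (continuous_const.sub χ.continuous).aestronglyMeasurable
      (ae_of_all _ fun y => ?_)
    rw [Real.norm_eq_abs, abs_le]
    constructor <;> linarith [(hχ_mem y).1, (hχ_mem y).2]
  · simp [hχ_one hy]

variable [μ.IsAddHaarMeasure]

lemma convolutionExistsAt_of_eqOn_closedBall_zero (L : A →L[ℝ] B →L[ℝ] F) {x₀ x : G}
    (hfint : Integrable f μ) (hf : Set.EqOn f 0 (Metric.closedBall x₀ 2))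
    (hkmeas : AEStronglyMeasurable k μ) (hk : ∀ z, 1 ≤ ‖z‖ → ‖k z‖ ≤ C)
    (hx : x ∈ Metric.ball x₀ 1) : ConvolutionExistsAt f k x L μ :=
  ((hfint.norm.const_mul ‖L‖).mul_const C).mono'
    (hfint.aestronglyMeasurable.convolution_integrand_snd L hkmeas x)
    (ae_of_all _ (norm_convolution_integrand_le_of_eqOn_closedBall_zero L hf hk hx))

lemma continuousAt_convolution_of_eqOn_closedBall_zero (L : A →L[ℝ] B →L[ℝ] F) {x₀ : G}
    (hfint : Integrable f μ) (hf : Set.EqOn f 0 (Metric.closedBall x₀ 2))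
    (hkmeas : AEStronglyMeasurable k μ) (hkcont : ContinuousOn k {0}ᶜ)
    (hk : ∀ z, 1 ≤ ‖z‖ → ‖k z‖ ≤ C) : ContinuousAt (f ⋆[L, μ] k) x₀ := by
  have hball : Metric.ball x₀ 1 ∈ 𝓝 x₀ := Metric.ball_mem_nhds x₀ one_pos
  refine continuousAt_of_dominated
    (.of_forall fun x => hfint.aestronglyMeasurable.convolution_integrand_snd L hkmeas x)
    (mem_of_superset hball fun x hx =>
      ae_of_all _ (norm_convolution_integrand_le_of_eqOn_closedBall_zero L hf hk hx))
    ((hfint.norm.const_mul ‖L‖).mul_const C) (ae_of_all _ fun y => ?_)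
  by_cases hy : y ∈ Metric.closedBall x₀ 2
  · simpa [hf hy] using continuousAt_const
  · have hxy : x₀ - y ≠ 0 := fun h => hy (by simp [← sub_eq_zero.1 h])
    have hkx : ContinuousAt k (x₀ - y) := hkcont.continuousAt (isOpen_compl_singleton.mem_nhds hxy)
    exact (L (f y)).continuous.continuousAt.comp
      (ContinuousAt.comp (g := k) hkx (continuous_sub_right y).continuousAt)

lemma convolutionExists_of_integrable_of_norm_le (L : A →L[ℝ] B →L[ℝ] F)
    (hf : Integrable f μ) (hkmeas : AEStronglyMeasurable k μ) (hk : ∀ z, ‖k z‖ ≤ C) :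
    ConvolutionExists f k L μ := fun x =>
  ((hf.norm.const_mul ‖L‖).mul_const C).mono'
    (hf.aestronglyMeasurable.convolution_integrand_snd L hkmeas x)
    (ae_of_all _ fun y => (L.le_opNorm₂ _ _).trans (by gcongr; exact hk _))

theorem convolutionExists_of_locallyIntegrable_of_norm_le (L : A →L[ℝ] B →L[ℝ] F)
    (hf : Continuous f) (hfint : Integrable f μ) (hkloc : LocallyIntegrable k μ)
    (hk : ∀ z, 1 ≤ ‖z‖ → ‖k z‖ ≤ C) : ConvolutionExists f k L μ := fun x => by
  obtain ⟨f₁, f₂, hadd, hf₁, hf₁supp, hf₂, hf₂zero⟩ :=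
    exists_add_eqOn_closedBall_zero hf hfint x 2
  have hnear := hf₁supp.convolutionExists_left L hf₁ hkloc x
  have hfar := convolutionExistsAt_of_eqOn_closedBall_zero L hf₂ hf₂zero
    hkloc.aestronglyMeasurable hk (Metric.mem_ball_self one_pos)
  rw [← hadd]
  refine (hnear.integrable.add hfar.integrable).congr (ae_of_all _ fun t => ?_)
  simp

theorem continuous_convolution_of_locallyIntegrable_of_norm_le (L : A →L[ℝ] B →L[ℝ] F)
    (hf : Continuous f) (hfint : Integrable f μ) (hkloc : LocallyIntegrable k μ)
    (hkcont : ContinuousOn k {0}ᶜ) (hk : ∀ z, 1 ≤ ‖z‖ → ‖k z‖ ≤ C) :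
    Continuous (f ⋆[L, μ] k) := continuous_iff_continuousAt.2 fun x₀ => by
  obtain ⟨f₁, f₂, hadd, hf₁, hf₁supp, hf₂, hf₂zero⟩ :=
    exists_add_eqOn_closedBall_zero hf hfint x₀ 2
  have hkmeas := hkloc.aestronglyMeasurable
  have hsum : ∀ᶠ x in 𝓝 x₀, (f ⋆[L, μ] k) x = (f₁ ⋆[L, μ] k) x + (f₂ ⋆[L, μ] k) x := by
    filter_upwards [Metric.ball_mem_nhds x₀ one_pos] with x hx
    rw [← hadd]
    exact (hf₁supp.convolutionExists_left L hf₁ hkloc x).add_distrib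
      (convolutionExistsAt_of_eqOn_closedBall_zero L hf₂ hf₂zero hkmeas hk hx)
  exact ((hf₁supp.continuous_convolution_left L hf₁ hkloc).continuousAt.add
    (continuousAt_convolution_of_eqOn_closedBall_zero L hf₂ hf₂zero hkmeas hkcont hk)).congr
    (hsum.mono fun _ h => h.symm)

variable [NormedSpace ℝ G] [Nontrivial G]

theorem hasFDerivAt_integral_smul_sub {g : G → ℝ} {k b : G → F}
    {k' : G → G →L[ℝ] F} {K : G → ℝ} {x : G}
    (hg : AEStronglyMeasurable g μ)
    (hint : ∀ x, Integrable (fun y => g y • (k (x - y) - b y)) μ)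
    (hk'meas : AEStronglyMeasurable k' μ)
    (hK : ConvolutionExistsAt g K x (lsmul ℝ ℝ) μ)
    (hlip : ∀ a z, z ≠ 0 → ‖k a - k z‖ ≤ K z * ‖a - z‖)
    (hk' : ∀ z, z ≠ 0 → HasFDerivAt k (k' z) z) :
    HasFDerivAt (fun x => ∫ y, g y • (k (x - y) - b y) ∂μ) ((g ⋆[lsmul ℝ ℝ, μ] k') x) x := by
  have hne : ∀ᵐ y ∂μ, x - y ≠ 0 :=
    (Measure.ae_ne μ x).mono fun y hy => sub_ne_zero.2 hy.symm
  refine (hasFDerivAt_integral_of_dominated_loc_of_lip' (s := Set.univ) univ_mem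
    (fun x _ => (hint x).aestronglyMeasurable) (hint x)
    (hg.convolution_integrand_snd (lsmul ℝ ℝ) hk'meas x) ?_ hK.integrable.norm ?_).2
  · filter_upwards [hne] with y hy a _
    have h := hlip (a - y) _ hy
    rw [sub_sub_sub_cancel_right] at h
    rw [← smul_sub, sub_sub_sub_cancel_right, norm_smul]
    calc ‖g y‖ * ‖k (a - y) - k (x - y)‖ ≤ ‖g y‖ * (‖K (x - y)‖ * ‖a - x‖) := by
          gcongr
          exact h.trans (by gcongr; exact Real.le_norm_self _)
      _ = ‖lsmul ℝ ℝ (g y) (K (x - y))‖ * ‖a - x‖ := by simp [mul_assoc]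
  · filter_upwards [hne] with y hy
    exact (((hasFDerivAt_comp_sub y).2 (hk' _ hy)).sub_const (b y)).const_smul (g y)

end Convolution

section KernelIntegrability

variable {V : Type*} [NormedAddCommGroup V] [NormedSpace ℝ V] [FiniteDimensional ℝ V]
  [MeasurableSpace V] [BorelSpace V] {μ : Measure V}

lemma aestronglyMeasurable_normalize :
    AEStronglyMeasurable (NormedSpace.normalize : V → V) μ :=
  (measurable_norm.inv.smul measurable_id).aestronglyMeasurable

variable [μ.IsAddHaarMeasure]

lemma convolutionExists_normalize {g : V → ℝ} (hg : Integrable g μ) :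
    ConvolutionExists g (NormedSpace.normalize : V → V) (lsmul ℝ ℝ) μ :=
  convolutionExists_of_integrable_of_norm_le _ hg aestronglyMeasurable_normalize
    norm_normalize_le_one

lemma locallyIntegrable_inv_norm (hdim : 1 < Module.finrank ℝ V) :
    LocallyIntegrable (fun z : V => ‖z‖⁻¹) μ :=
  locallyIntegrable_of_norm_le_rpow (C := 1) (α := 1) hdim.le (mod_cast hdim)
    (ae_of_all _ fun z => by simp [Real.rpow_neg_one]) (by fun_prop)

variable {E : Type*} [NormedAddCommGroup E] [InnerProductSpace ℝ E] [FiniteDimensional ℝ E]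
  [MeasurableSpace E] [BorelSpace E] {ν : Measure E} [ν.IsAddHaarMeasure]

lemma locallyIntegrable_fderivNormalize (hdim : 1 < Module.finrank ℝ E) :
    LocallyIntegrable (fderivNormalize : E → E →L[ℝ] E) ν :=
  have := Module.nontrivial_of_finrank_pos (zero_lt_one.trans hdim)
  (locallyIntegrable_inv_norm hdim).mono
    (aestronglyMeasurable_of_continuousOn_compl_singleton continuousOn_fderivNormalize)
    (ae_of_all _ fun z => (norm_fderivNormalize_le z).trans (Real.le_norm_self _))

lemma convolutionExists_fderivNormalize {g : E → ℝ} (hdim : 1 < Module.finrank ℝ E)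
    (hg : Continuous g) (hgint : Integrable g ν) :
    ConvolutionExists g (fderivNormalize : E → E →L[ℝ] E) (lsmul ℝ ℝ) ν :=
  convolutionExists_of_locallyIntegrable_of_norm_le _ hg hgint
    (locallyIntegrable_fderivNormalize hdim) fun _ => norm_fderivNormalize_le_one

end KernelIntegrability

section NormPotential

variable {E : Type*} [NormedAddCommGroup E] [MeasurableSpace E]

/-- The potential of the density `g` for the kernel `‖x - y‖`, renormalized by `‖y‖` so that
integrability of `g` alone makes the integral converge. -/
noncomputable def normPotential (μ : Measure E) (g : E → ℝ) (x : E) : ℝ :=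
  ∫ y, (‖x - y‖ - ‖y‖) * g y ∂μ

variable {μ : Measure E} {g : E → ℝ}

lemma normPotential_zero : normPotential μ g 0 = 0 := by
  simp [normPotential]

lemma normPotential_const_smul (c : ℝ) (x : E) :
    normPotential μ (c • g) x = c * normPotential μ g x := by
  simp only [normPotential, Pi.smul_apply, smul_eq_mul, mul_left_comm _ c, integral_const_mul]

lemma even_normPotential [MeasurableNeg E] [μ.IsNegInvariant] (hg : g.Even) :
    (normPotential μ g).Even := fun x => by
  rw [normPotential, ← integral_neg_eq_self]
  simp only [normPotential, hg _, ← neg_sub', norm_neg]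

variable [InnerProductSpace ℝ E] [BorelSpace E] [FiniteDimensional ℝ E] [μ.IsAddHaarMeasure]

lemma hasFDerivAt_normPotential [Nontrivial E] (hg : Integrable g μ) (x : E) :
    HasFDerivAt (normPotential μ g)
      (innerSL ℝ ((g ⋆[lsmul ℝ ℝ, μ] NormedSpace.normalize) x)) x := by
  have hint (x : E) : Integrable (fun y => g y • (‖x - y‖ - ‖y‖)) μ :=
    hg.smul_bdd ‖x‖ (by fun_prop) <| ae_of_all _ fun y => by
      simpa using abs_norm_sub_norm_le (x - y) (-y)
  have h := hasFDerivAt_integral_smul_sub (K := fun _ => 1) (x := x) hg.aestronglyMeasurable hint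
    ((innerSL ℝ).continuous.comp_aestronglyMeasurable aestronglyMeasurable_normalize)
    (convolutionExists_of_integrable_of_norm_le _ hg aestronglyMeasurable_const
      (fun _ => norm_one.le) x)
    (fun a z _ => by simpa using abs_norm_sub_norm_le a z) (fun _ => hasFDerivAt_norm)
  rw [clm_apply_convolution _ (convolutionExists_normalize hg x)]
  simpa only [smul_eq_mul, mul_comm (g _)] using! h

lemma hasFDerivAt_convolution_normalize (hdim : 1 < Module.finrank ℝ E) (hg : Continuous g)
    (hgint : Integrable g μ) (x : E) :
    HasFDerivAt (g ⋆[lsmul ℝ ℝ, μ] NormedSpace.normalize)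
      ((g ⋆[lsmul ℝ ℝ, μ] fderivNormalize) x) x := by
  have := Module.nontrivial_of_finrank_pos (zero_lt_one.trans hdim)
  have hK : ConvolutionExists g (fun z : E => 2 * ‖z‖⁻¹) (lsmul ℝ ℝ) μ :=
    convolutionExists_of_locallyIntegrable_of_norm_le (C := 2) _ hg hgint
      ((locallyIntegrable_inv_norm hdim).smul (2 : ℝ)) fun z hz => by
        simpa using inv_le_one_of_one_le₀ hz
  simpa only [sub_zero] using! hasFDerivAt_integral_smul_sub (b := fun _ => 0)
    hg.aestronglyMeasurable
    (fun x => by simpa using (convolutionExists_normalize hgint x).integrable)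
    (locallyIntegrable_fderivNormalize hdim).aestronglyMeasurable (hK x)
    (fun a _ => norm_normalize_sub_normalize_le a) (fun _ => hasFDerivAt_normalize)

lemma hasFDerivAt_fderiv_normPotential (hdim : 1 < Module.finrank ℝ E) (hg : Continuous g)
    (hgint : Integrable g μ) (x : E) :
    HasFDerivAt (fderiv ℝ (normPotential μ g))
      ((innerSL ℝ : E →L[ℝ] E →L[ℝ] ℝ).comp ((g ⋆[lsmul ℝ ℝ, μ] fderivNormalize) x)) x := by
  have := Module.nontrivial_of_finrank_pos (zero_lt_one.trans hdim)
  rw [funext fun x => (hasFDerivAt_normPotential hgint x).fderiv]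
  exact (innerSL ℝ : E →L[ℝ] E →L[ℝ] ℝ).hasFDerivAt.comp x
    (hasFDerivAt_convolution_normalize hdim hg hgint x)

theorem contDiff_two_normPotential (hdim : 1 < Module.finrank ℝ E) (hg : Continuous g)
    (hgint : Integrable g μ) : ContDiff ℝ 2 (normPotential μ g) := by
  have := Module.nontrivial_of_finrank_pos (zero_lt_one.trans hdim)
  have hhess : Continuous (g ⋆[lsmul ℝ ℝ, μ] (fderivNormalize : E → E →L[ℝ] E)) :=
    continuous_convolution_of_locallyIntegrable_of_norm_le _ hg hgint
      (locallyIntegrable_fderivNormalize hdim) continuousOn_fderivNormalize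
      fun _ => norm_fderivNormalize_le_one
  exact contDiff_two_of_hasFDerivAt
    (fun x => (hasFDerivAt_normPotential hgint x).differentiableAt.hasFDerivAt)
    (hasFDerivAt_fderiv_normPotential hdim hg hgint) (continuous_const.clm_comp hhess)

theorem iteratedFDeriv_two_normPotential (hdim : 1 < Module.finrank ℝ E) (hg : Continuous g)
    (hgint : Integrable g μ) (x w : E) :
    iteratedFDeriv ℝ 2 (normPotential μ g) x ![w, w] =
      inner ℝ w ((g ⋆[lsmul ℝ ℝ, μ] fderivNormalize) x w) := by
  rw [iteratedFDeriv_two_apply, (hasFDerivAt_fderiv_normPotential hdim hg hgint x).fderiv]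
  exact real_inner_comm _ _

theorem iteratedFDeriv_two_normPotential_pos (hdim : 1 < Module.finrank ℝ E) (hg : Continuous g)
    (hgnonneg : ∀ x, 0 ≤ g x) (hgne : g ≠ 0) (hgint : Integrable g μ) (x : E) {w : E}
    (hw : w ≠ 0) : 0 < iteratedFDeriv ℝ 2 (normPotential μ g) x ![w, w] := by
  let quadratic : (E →L[ℝ] E) →L[ℝ] ℝ := (innerSL ℝ w).comp (ContinuousLinearMap.apply ℝ E w)
  have hexists := convolutionExists_fderivNormalize hdim hg hgint x
  have hpos : ∀ᵐ y ∂μ, 0 < quadratic (fderivNormalize (x - y)) :=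
    (ae_sub_notMem_submodule (span_singleton_ne_top hdim w) x).mono
      fun y hy => inner_fderivNormalize_self_pos hw hy
  calc 0 < ∫ y, g y * quadratic (fderivNormalize (x - y)) ∂μ :=
        integral_mul_pos_of_ae_pos hg hgnonneg hgne hpos
          (convolutionExistsAt_clm_comp quadratic hexists).integrable
    _ = quadratic ((g ⋆[lsmul ℝ ℝ, μ] fderivNormalize) x) :=
        (clm_apply_convolution quadratic hexists).symm
    _ = iteratedFDeriv ℝ 2 (normPotential μ g) x ![w, w] :=
        (iteratedFDeriv_two_normPotential hdim hg hgint x w).symm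

theorem potential_strictly_convex_min_at_origin_general (hdim : 1 < Module.finrank ℝ E) {c : ℝ}
    (hc : 0 < c) (hg : Continuous g) (hgnonneg : ∀ x, 0 ≤ g x) (hgne : g ≠ 0) (hgeven : g.Even)
    (hgint : Integrable g μ) {v : E → ℝ} (hv : ∀ x, v x = c * ∫ y, (‖x - y‖ - ‖y‖) * g y ∂μ) :
    ContDiff ℝ 2 v ∧
    (∀ x w, w ≠ 0 → 0 < iteratedFDeriv ℝ 2 v x ![w, w]) ∧
    StrictConvexOn ℝ Set.univ v ∧
    fderiv ℝ v 0 = 0 ∧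
    v 0 = 0 ∧ (∀ x, 0 ≤ v x) ∧ (∀ x, x ≠ 0 → 0 < v x) := by
  obtain rfl : v = normPotential μ (c • g) :=
    funext fun x => (hv x).trans (normPotential_const_smul c x).symm
  have hcont : Continuous (c • g) := hg.const_smul c
  have hint : Integrable (c • g) μ := hgint.smul c
  have hsmooth := contDiff_two_normPotential hdim hcont hint
  have hhess (x w : E) (hw : w ≠ 0) := iteratedFDeriv_two_normPotential_pos hdim hcont
    (fun x => mul_nonneg hc.le (hgnonneg x)) (smul_ne_zero hc.ne' hgne) hint x hw
  have hconv := strictConvexOn_univ_of_iteratedFDeriv_two_pos hsmooth hhess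
  have heven : (normPotential μ (c • g)).Even :=
    even_normPotential fun x => congrArg (c * ·) (hgeven x)
  have hpos (x : E) (hx : x ≠ 0) : 0 < normPotential μ (c • g) x :=
    normPotential_zero.symm.trans_lt (lt_of_strictConvexOn_of_even hconv heven hx)
  refine ⟨hsmooth, hhess, hconv, fderiv_zero_of_even heven, normPotential_zero, fun x => ?_, hpos⟩
  obtain rfl | hx := eq_or_ne x 0
  exacts [normPotential_zero.ge, (hpos x hx).le]

end NormPotential

lemma integrable_of_one_add_norm_mul {E : Type*} [NormedAddCommGroup E] [MeasurableSpace E]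
    [OpensMeasurableSpace E] {μ : Measure E} {g : E → ℝ}
    (hg : Integrable (fun y => (1 + ‖y‖) * g y) μ) : Integrable g μ := by
  have hpos (y : E) : 0 < 1 + ‖y‖ := by positivity
  have hweight : Continuous fun y : E => (1 + ‖y‖)⁻¹ :=
    (by fun_prop : Continuous fun y : E => 1 + ‖y‖).inv₀ fun y => (hpos y).ne'
  refine (hg.bdd_mul (c := 1) hweight.aestronglyMeasurable (ae_of_all _ fun y => ?_)).congr
    (ae_of_all _ fun y => inv_mul_cancel_left₀ (hpos y).ne' (g y))
  rw [norm_inv, Real.norm_of_nonneg (hpos y).le]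
  exact inv_le_one_of_one_le₀ (le_add_of_nonneg_right (norm_nonneg y))

/-- If `g : ℝ³ → (0,∞)` is continuous, even, with `∫ (1+|y|) g(y) dy < ∞`, and
`v(x) := (8π)⁻¹ ∫ (|x−y| − |y|) g(y) dy`, then `v` is `C²`, its Hessian is positive definite
everywhere (so `v` is strictly convex), `∇v(0) = 0`, and `v ≥ v(0) = 0` with the minimum
attained exactly at `0`. -/
theorem potential_strictly_convex_min_at_origin
    (g : EuclideanSpace ℝ (Fin 3) → ℝ)
    (hgcont : Continuous g) (hgpos : ∀ x, 0 < g x) (hgeven : ∀ x, g (-x) = g x)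
    (hgint : Integrable (fun y => (1 + ‖y‖) * g y))
    (v : EuclideanSpace ℝ (Fin 3) → ℝ)
    (hv : ∀ x, v x = (8 * π)⁻¹ * ∫ y, (‖x - y‖ - ‖y‖) * g y) :
    ContDiff ℝ 2 v ∧
    (∀ x, ∀ w : EuclideanSpace ℝ (Fin 3), w ≠ 0 → 0 < iteratedFDeriv ℝ 2 v x ![w, w]) ∧
    StrictConvexOn ℝ Set.univ v ∧
    fderiv ℝ v 0 = 0 ∧
    v 0 = 0 ∧ (∀ x, 0 ≤ v x) ∧ (∀ x, x ≠ 0 → 0 < v x) :=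
  potential_strictly_convex_min_at_origin_general (by simp) (by positivity) hgcont
    (fun x => (hgpos x).le) (fun h => (hgpos 0).ne' (congrFun h 0)) hgeven
    (integrable_of_one_add_norm_mul hgint) hv
end

section
/- Let q > 1. Then there exists a radially symmetric solution u to Δ²u + u^{−q} = 0 in ℝ³ with u > 0 such that lim_{|x|→∞} u(x)/|x|² exists and lies in (0, ∞); that is, u has exact quadratic growth at infinity. -/
open MeasureTheory Filter Topology Real

/-- The Laplacian of a function on ℝ³. -/
noncomputable def laplacian (u : EuclideanSpace ℝ (Fin 3) → ℝ) (x : EuclideanSpace ℝ (Fin 3)) : ℝ :=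
  ∑ i : Fin 3, iteratedFDeriv ℝ 2 u x ![EuclideanSpace.single i 1, EuclideanSpace.single i 1]

/-! In terms of `s = ‖x‖ ^ 2`, the radial form of the system `Δ u = v`, `Δ v = -u ^ (-q)` is a pair
of integral equations without singularity at `s = 0`. As long as `v ≥ 2 * d * c`, where `d` is the
dimension, `u` dominates `1 + c * ‖x‖ ^ 2`; since `q > 1`, this makes `u ^ (-q)` integrable in `s`,
and for `d ≥ 3` its radial potential is at most `1 / (2 * c * (q - 1))`. Hence, if `c` is large and
`v` starts at `2 * d * c + 1`, then `v` never drops below `2 * d * c`, and the same decay makes the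
iteration truncated at that level a contraction. The resulting `v` decreases to a limit `ℓ > 0`, so
`u / ‖x‖ ^ 2` tends to `ℓ / (2 * d)`. -/

open scoped ContDiff Laplacian

section ParametricIntegral

variable {E F : Type*} [NormedAddCommGroup E] [NormedSpace ℝ E]
  [NormedAddCommGroup F] [NormedSpace ℝ F]

theorem hasFDerivAt_parametric_intervalIntegral [ProperSpace E] {K : E → ℝ → F}
    {K' : E → ℝ → E →L[ℝ] F} (hK : Continuous K.uncurry) (hK' : Continuous K'.uncurry)
    (hderiv : ∀ x t, HasFDerivAt (fun y => K y t) (K' x t) x) (a b : ℝ) (x : E) :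
    HasFDerivAt (fun y => ∫ t in a..b, K y t) (∫ t in a..b, K' x t) x := by
  obtain ⟨C, hC⟩ := ((isCompact_closedBall x 1).prod isCompact_uIcc).exists_bound_of_continuousOn
    (s := Metric.closedBall x 1 ×ˢ Set.uIcc a b) hK'.continuousOn
  refine intervalIntegral.hasFDerivAt_integral_of_dominated_of_fderiv_le (bound := fun _ => C)
    (Metric.closedBall_mem_nhds x one_pos) ?_ ?_ ?_ ?_ intervalIntegrable_const ?_
  · exact .of_forall fun y => (hK.uncurry_left y).aestronglyMeasurable
  · exact (hK.uncurry_left x).intervalIntegrable _ _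
  · exact (hK'.uncurry_left x).aestronglyMeasurable
  · exact .of_forall fun t ht y hy => hC (y, t) ⟨hy, Set.uIoc_subset_uIcc ht⟩
  · exact .of_forall fun t _ y _ => hderiv y t

theorem contDiff_parametric_intervalIntegral [FiniteDimensional ℝ E] {n : ℕ} {K : E → ℝ → F}
    (hK : ContDiff ℝ n K.uncurry) (a b : ℝ) :
    ContDiff ℝ n (fun x => ∫ t in a..b, K x t) := by
  induction n generalizing K with
  | zero =>
    have hK_cont := hK.continuous
    exact contDiff_zero.2 (by fun_prop)
  | succ n ih =>
    push_cast at hK ⊢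
    set K' : E → ℝ → E →L[ℝ] F := fun x t => (fderiv ℝ K.uncurry (x, t)).comp (.inl ℝ E ℝ)
    have hfderiv : ContDiff ℝ n (fderiv ℝ K.uncurry) := hK.fderiv_right le_rfl
    have hK'_cont : Continuous K'.uncurry :=
      hfderiv.continuous.clm_comp continuous_const
    have hint : ∀ x, HasFDerivAt (fun y => ∫ t in a..b, K y t) (∫ t in a..b, K' x t) x := by
      refine hasFDerivAt_parametric_intervalIntegral hK.continuous hK'_cont (fun x t => ?_) a b
      have hdiff : HasFDerivAt K.uncurry (fderiv ℝ K.uncurry (x, t)) (x, t) :=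
        (hK.differentiable (by simp) (x, t)).hasFDerivAt
      exact hdiff.comp (f := fun y => (y, t)) x (hasFDerivAt_prodMk_left x t)
    refine contDiff_succ_iff_fderiv_apply.2 ⟨fun x => (hint x).differentiableAt, by simp,
      fun y => ?_⟩
    have happly : (fun x => fderiv ℝ (fun y => ∫ t in a..b, K y t) x y) =
        fun x => ∫ t in a..b, fderiv ℝ K.uncurry (x, t) (y, 0) := by
      funext x
      rw [(hint x).fderiv, ContinuousLinearMap.intervalIntegral_apply
        ((hK'_cont.uncurry_left x).intervalIntegrable _ _)]
      simp [K']
    rw [happly]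
    exact ih (K := fun x t => fderiv ℝ K.uncurry (x, t) (y, 0))
      (hfderiv.clm_apply contDiff_const)

end ParametricIntegral

theorem tendsto_intervalIntegral_mul_comp_dilation {φ w k : ℝ → ℝ} {C ℓ : ℝ}
    (hφ : Continuous φ) (hw : Continuous w) (hk : Continuous k)
    (hk_pos : ∀ t ∈ Set.Ioc (0 : ℝ) 1, 0 < k t) (hbound : ∀ s, 0 ≤ s → |φ s| ≤ C)
    (hlim : Tendsto φ atTop (𝓝 ℓ)) :
    Tendsto (fun s => ∫ t in (0 : ℝ)..1, w t * φ (k t * s)) atTop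
      (𝓝 (∫ t in (0 : ℝ)..1, w t * ℓ)) := by
  refine intervalIntegral.tendsto_integral_filter_of_dominated_convergence (fun t => |w t| * C)
    ?_ ?_ (Continuous.intervalIntegrable (by fun_prop) _ _) ?_
  · exact .of_forall fun s => Continuous.aestronglyMeasurable (by fun_prop)
  · filter_upwards [eventually_ge_atTop 0] with s hs
    refine .of_forall fun t ht => ?_
    rw [Set.uIoc_of_le zero_le_one] at ht
    rw [norm_mul, Real.norm_eq_abs, Real.norm_eq_abs]
    gcongr
    exact hbound _ (mul_nonneg (hk_pos t ht).le hs)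
  · refine .of_forall fun t ht => ?_
    rw [Set.uIoc_of_le zero_le_one] at ht
    exact (hlim.comp (tendsto_id.const_mul_atTop (hk_pos t ht))).const_mul (w t)

theorem exists_continuous_fixedPoint {X : Type*} [TopologicalSpace X] {Φ : (X → ℝ) → X → ℝ}
    {K : NNReal} (hK : K < 1) (hcont : ∀ f, Continuous f → Continuous (Φ f))
    (hbound : ∃ C, ∀ f, Continuous f → ∀ x, |Φ f x| ≤ C)
    (hlip : ∀ f g, Continuous f → Continuous g → ∀ δ, (∀ x, |f x - g x| ≤ δ) →
      ∀ x, |Φ f x - Φ g x| ≤ K * δ) :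
    ∃ f, Continuous f ∧ Φ f = f := by
  obtain ⟨C, hC⟩ := hbound
  let Ψ : BoundedContinuousFunction X ℝ → BoundedContinuousFunction X ℝ := fun f =>
    .ofNormedAddCommGroup (Φ f) (hcont f f.continuous) C (hC f f.continuous)
  have hΨ : ContractingWith K Ψ := by
    refine ⟨hK, LipschitzWith.of_dist_le_mul fun f g => ?_⟩
    refine (BoundedContinuousFunction.dist_le (by positivity)).2 fun x => ?_
    exact hlip f g f.continuous g.continuous _ (fun y => f.dist_coe_le_dist y) x
  exact ⟨hΨ.fixedPoint, hΨ.fixedPoint.continuous, congrArg DFunLike.coe hΨ.fixedPoint_isFixedPt⟩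

section RadialPotential

/-- The mean of `x ↦ φ (‖x‖ ^ 2)` over the ball of radius `√s` in dimension `d`, divided by `d`.
It is the factor `G` for which the radial vector field `G (‖x‖ ^ 2) • x` has divergence
`φ (‖x‖ ^ 2)`. -/
noncomputable def radialMean (d : ℕ) (φ : ℝ → ℝ) (s : ℝ) : ℝ :=
  ∫ t in (0 : ℝ)..1, t ^ (d - 1) * φ (t ^ 2 * s)

/-- The inverse of the radial Laplacian in dimension `d`, normalized to vanish at the origin:
`x ↦ radialPotential d φ (‖x‖ ^ 2)` has Laplacian `φ (‖x‖ ^ 2)`. Profiles are functions of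
`s = ‖x‖ ^ 2` rather than of `‖x‖`, so that no singularity appears at the origin. -/
noncomputable def radialPotential (d : ℕ) (φ : ℝ → ℝ) (s : ℝ) : ℝ :=
  2⁻¹ * ∫ σ in (0 : ℝ)..s, radialMean d φ σ

variable {d : ℕ} {φ ψ χ : ℝ → ℝ}

theorem continuous_radialMean (hφ : Continuous φ) : Continuous (radialMean d φ) := by
  unfold radialMean
  fun_prop

theorem radialMean_mono (hφ : Continuous φ) (hψ : Continuous ψ)
    (hle : ∀ s, 0 ≤ s → φ s ≤ ψ s) {s : ℝ} (hs : 0 ≤ s) : radialMean d φ s ≤ radialMean d ψ s := by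
  refine intervalIntegral.integral_mono_on zero_le_one
    (Continuous.intervalIntegrable (by fun_prop) _ _)
    (Continuous.intervalIntegrable (by fun_prop) _ _) fun t ht => ?_
  have := hle (t ^ 2 * s) (by positivity)
  have := ht.1
  gcongr

theorem radialMean_nonneg (hφ : ∀ s, 0 ≤ φ s) (s : ℝ) : 0 ≤ radialMean d φ s :=
  intervalIntegral.integral_nonneg zero_le_one fun _ ht =>
    mul_nonneg (pow_nonneg ht.1 _) (hφ _)

theorem integral_pow_pred (hd : d ≠ 0) : ∫ t in (0 : ℝ)..1, t ^ (d - 1) = (d : ℝ)⁻¹ := by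
  obtain ⟨k, rfl⟩ := Nat.exists_eq_succ_of_ne_zero hd
  simp

theorem radialMean_const (hd : d ≠ 0) (k s : ℝ) : radialMean d (fun _ => k) s = k / d := by
  rw [radialMean, intervalIntegral.integral_mul_const, integral_pow_pred hd, inv_mul_eq_div]

theorem radialMean_sub (hφ : Continuous φ) (hψ : Continuous ψ) (s : ℝ) :
    radialMean d (fun σ => φ σ - ψ σ) s = radialMean d φ s - radialMean d ψ s := by
  simp only [radialMean, mul_sub]
  exact intervalIntegral.integral_sub (Continuous.intervalIntegrable (by fun_prop) _ _)
    (Continuous.intervalIntegrable (by fun_prop) _ _)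

theorem abs_radialMean_le {C : ℝ} (hbound : ∀ s, 0 ≤ s → |φ s| ≤ C) {s : ℝ} (hs : 0 ≤ s) :
    |radialMean d φ s| ≤ C := by
  have hpoint : ∀ t ∈ Set.uIoc (0 : ℝ) 1, ‖t ^ (d - 1) * φ (t ^ 2 * s)‖ ≤ C := fun t ht => by
    rw [Set.uIoc_of_le zero_le_one] at ht
    rw [norm_mul, norm_pow, Real.norm_of_nonneg ht.1.le]
    exact (mul_le_of_le_one_left (norm_nonneg _) (pow_le_one₀ ht.1.le ht.2)).trans
      (hbound _ (by positivity))
  simpa [radialMean] using intervalIntegral.norm_integral_le_of_norm_le_const hpoint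

theorem pow_mul_radialMean_sq_mul (hd : d ≠ 0) (φ : ℝ → ℝ) (l s : ℝ) :
    l ^ d * radialMean d φ (l ^ 2 * s) = ∫ τ in (0 : ℝ)..l, τ ^ (d - 1) * φ (τ ^ 2 * s) := by
  have hsub := intervalIntegral.mul_integral_comp_mul_left (a := 0) (b := 1)
    (f := fun τ => τ ^ (d - 1) * φ (τ ^ 2 * s)) (c := l)
  rw [mul_zero, mul_one] at hsub
  rw [← hsub, radialMean, ← mul_pow_sub_one hd l, mul_assoc,
    ← intervalIntegral.integral_const_mul (l ^ (d - 1))]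
  simp only [mul_pow, mul_assoc, mul_left_comm]

theorem hasDerivAt_radialPotential (hφ : Continuous φ) (s : ℝ) :
    HasDerivAt (radialPotential d φ) (2⁻¹ * radialMean d φ s) s :=
  ((continuous_radialMean hφ).integral_hasStrictDerivAt 0 s).hasDerivAt.const_mul 2⁻¹

theorem continuous_radialPotential (hφ : Continuous φ) : Continuous (radialPotential d φ) :=
  continuous_iff_continuousAt.2 fun s => (hasDerivAt_radialPotential hφ s).continuousAt

@[simp]
theorem radialPotential_apply_zero (d : ℕ) (φ : ℝ → ℝ) : radialPotential d φ 0 = 0 := by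
  simp [radialPotential]

theorem radialPotential_const (hd : d ≠ 0) (k s : ℝ) :
    radialPotential d (fun _ => k) s = k * s / (2 * d) := by
  simp only [radialPotential, radialMean_const hd, intervalIntegral.integral_const, smul_eq_mul]
  ring

theorem radialPotential_sub (hφ : Continuous φ) (hψ : Continuous ψ) (s : ℝ) :
    radialPotential d (fun σ => φ σ - ψ σ) s = radialPotential d φ s - radialPotential d ψ s := by
  simp only [radialPotential, radialMean_sub hφ hψ]
  rw [intervalIntegral.integral_sub ((continuous_radialMean hφ).intervalIntegrable _ _)
    ((continuous_radialMean hψ).intervalIntegrable _ _), mul_sub]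

theorem radialPotential_mono (hφ : Continuous φ) (hψ : Continuous ψ)
    (hle : ∀ s, 0 ≤ s → φ s ≤ ψ s) {s : ℝ} (hs : 0 ≤ s) :
    radialPotential d φ s ≤ radialPotential d ψ s :=
  mul_le_mul_of_nonneg_left
    (intervalIntegral.integral_mono_on hs ((continuous_radialMean hφ).intervalIntegrable _ _)
      ((continuous_radialMean hψ).intervalIntegrable _ _)
      fun _ hσ => radialMean_mono hφ hψ hle hσ.1) (by norm_num)

theorem monotone_radialPotential (hφ : Continuous φ) (hφ_nonneg : ∀ s, 0 ≤ φ s) :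
    Monotone (radialPotential d φ) :=
  monotone_of_hasDerivAt_nonneg (hasDerivAt_radialPotential hφ)
    fun s => mul_nonneg (by norm_num) (radialMean_nonneg hφ_nonneg s)

theorem abs_radialPotential_sub_le (hφ : Continuous φ) (hψ : Continuous ψ) (hχ : Continuous χ)
    (hle : ∀ s, 0 ≤ s → |φ s - ψ s| ≤ χ s) {s : ℝ} (hs : 0 ≤ s) :
    |radialPotential d φ s - radialPotential d ψ s| ≤ radialPotential d χ s := by
  rw [abs_sub_le_iff, ← radialPotential_sub hφ hψ, ← radialPotential_sub hψ hφ]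
  exact ⟨radialPotential_mono (hφ.sub hψ) hχ (fun σ hσ => (abs_sub_le_iff.1 (hle σ hσ)).1) hs,
    radialPotential_mono (hψ.sub hφ) hχ (fun σ hσ => (abs_sub_le_iff.1 (hle σ hσ)).2) hs⟩

theorem radialPotential_eq_integral_integral (hφ : Continuous φ) (s : ℝ) :
    radialPotential d φ s =
      2⁻¹ * ∫ t in (0 : ℝ)..1, t ^ (d - 1) * ∫ σ in (0 : ℝ)..s, φ (t ^ 2 * σ) := by
  have hint : IntegrableOn (Function.uncurry fun σ t : ℝ => t ^ (d - 1) * φ (t ^ 2 * σ))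
      (Set.uIoc 0 s ×ˢ Set.uIoc 0 1) :=
    (ContinuousOn.integrableOn_compact (isCompact_uIcc.prod isCompact_uIcc)
      (Continuous.continuousOn (by fun_prop))).mono_set
      (Set.prod_mono Set.uIoc_subset_uIcc Set.uIoc_subset_uIcc)
  simp only [radialPotential, radialMean, intervalIntegral_intervalIntegral_swap hint,
    intervalIntegral.integral_const_mul]

theorem radialPotential_le_of_integral_le (hd : 3 ≤ d) (hφ : Continuous φ)
    (hφ_nonneg : ∀ s, 0 ≤ s → 0 ≤ φ s) {M : ℝ}
    (hM : ∀ y, 0 ≤ y → ∫ σ in (0 : ℝ)..y, φ σ ≤ M) {s : ℝ} (hs : 0 ≤ s) :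
    radialPotential d φ s ≤ M / 2 := by
  have hslice : ∀ t ∈ Set.Icc (0 : ℝ) 1, t ^ (d - 1) * ∫ σ in (0 : ℝ)..s, φ (t ^ 2 * σ) ≤ M := by
    -- In dimension `d ≥ 3` the weight `t ^ (d - 1)` absorbs the Jacobian of `σ ↦ t ^ 2 * σ`.
    intro t ht
    have hinner : 0 ≤ ∫ σ in (0 : ℝ)..s, φ (t ^ 2 * σ) :=
      intervalIntegral.integral_nonneg hs fun σ hσ => hφ_nonneg _ (mul_nonneg (sq_nonneg t) hσ.1)
    calc t ^ (d - 1) * ∫ σ in (0 : ℝ)..s, φ (t ^ 2 * σ)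
        ≤ t ^ 2 * ∫ σ in (0 : ℝ)..s, φ (t ^ 2 * σ) :=
          mul_le_mul_of_nonneg_right (pow_le_pow_of_le_one ht.1 ht.2 (by omega)) hinner
      _ = ∫ σ in (0 : ℝ)..t ^ 2 * s, φ σ := by
          rw [intervalIntegral.mul_integral_comp_mul_left, mul_zero]
      _ ≤ M := hM _ (by positivity)
  have hmono := intervalIntegral.integral_mono_on (μ := volume) zero_le_one
    (Continuous.intervalIntegrable (by fun_prop) _ _) intervalIntegrable_const hslice
  rw [intervalIntegral.integral_const, sub_zero, one_smul] at hmono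
  rw [radialPotential_eq_integral_integral hφ]
  linarith

theorem tendsto_radialMean (hd : d ≠ 0) (hφ : Continuous φ) {C ℓ : ℝ}
    (hbound : ∀ s, 0 ≤ s → |φ s| ≤ C) (hlim : Tendsto φ atTop (𝓝 ℓ)) :
    Tendsto (radialMean d φ) atTop (𝓝 (ℓ / d)) := by
  rw [← inv_mul_eq_div, ← integral_pow_pred hd, ← intervalIntegral.integral_mul_const]
  exact tendsto_intervalIntegral_mul_comp_dilation hφ (by fun_prop) (by fun_prop)
    (fun t ht => pow_pos ht.1 2) hbound hlim

theorem tendsto_radialPotential_div (hd : d ≠ 0) (hφ : Continuous φ) {C ℓ : ℝ}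
    (hbound : ∀ s, 0 ≤ s → |φ s| ≤ C) (hlim : Tendsto φ atTop (𝓝 ℓ)) :
    Tendsto (fun s => radialPotential d φ s / s) atTop (𝓝 (ℓ / (2 * d))) := by
  have hdil := tendsto_intervalIntegral_mul_comp_dilation (w := fun _ => 2⁻¹) (k := id)
    (continuous_radialMean hφ) continuous_const continuous_id (fun t ht => ht.1)
    (fun _ => abs_radialMean_le hbound) (tendsto_radialMean hd hφ hbound hlim)
  rw [intervalIntegral.integral_const, sub_zero, one_smul, inv_mul_eq_div, div_div,
    mul_comm (d : ℝ)] at hdil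
  refine hdil.congr' ?_
  filter_upwards [eventually_gt_atTop 0] with s hs
  have hsub := intervalIntegral.mul_integral_comp_mul_right (a := 0) (b := 1) (c := s)
    (f := radialMean d φ)
  rw [zero_mul, one_mul] at hsub
  rw [eq_div_iff hs.ne', radialPotential, ← hsub, intervalIntegral.integral_const_mul]
  simp only [id]
  ring

end RadialPotential

section Laplacian

open Module

variable {E : Type*} [NormedAddCommGroup E] [InnerProductSpace ℝ E]

theorem laplacian_eq_of_hasFDerivAt_smul_innerSL [FiniteDimensional ℝ E] {w G : E → ℝ}
    (hw : ∀ x, HasFDerivAt w (G x • innerSL ℝ x) x) (hG : Differentiable ℝ G) (x : E) :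
    Δ w x = fderiv ℝ G x x + finrank ℝ E * G x := by
  let B : E →L[ℝ] E →L[ℝ] ℝ := innerSL ℝ
  have hB : ∀ y z, B y z = inner ℝ y z := fun _ _ => rfl
  have hgrad : fderiv ℝ w = fun y => G y • B y := funext fun y => (hw y).fderiv
  have hhess : HasFDerivAt (fun y => G y • B y) (G x • B + (fderiv ℝ G x).smulRight (B x)) x :=
    (hG x).hasFDerivAt.smul B.hasFDerivAt
  set b := stdOrthonormalBasis ℝ E
  calc Δ w x = ∑ i, (G x + fderiv ℝ G x (inner ℝ (b i) x • b i)) := by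
        simp [InnerProductSpace.laplacian_eq_iteratedFDeriv_orthonormalBasis w b,
          iteratedFDeriv_two_apply, hgrad, hhess.fderiv, hB, real_inner_comm x, mul_comm]
    _ = fderiv ℝ G x x + finrank ℝ E * G x := by
        rw [Finset.sum_add_distrib, ← map_sum, b.sum_repr', add_comm]
        simp

theorem laplacian_const_add [FiniteDimensional ℝ E] {F : Type*} [NormedAddCommGroup F]
    [NormedSpace ℝ F] (c : F) (f : E → F) : Δ (fun x => c + f x) = Δ f := by
  have hfderiv : fderiv ℝ (fun x => c + f x) = fderiv ℝ f := funext fun _ => fderiv_const_add c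
  simp only [InnerProductSpace.laplacian_eq_iteratedFDeriv_stdOrthonormalBasis,
    iteratedFDeriv_two_apply, hfderiv]

theorem laplacian_const_sub [FiniteDimensional ℝ E] {F : Type*} [NormedAddCommGroup F]
    [NormedSpace ℝ F] (c : F) (f : E → F) : Δ (fun x => c - f x) = -Δ f := by
  simp only [sub_eq_add_neg, laplacian_const_add]
  exact InnerProductSpace.laplacian_neg

theorem hasFDerivAt_comp_norm_sq {f : ℝ → ℝ} {f' : ℝ} {x : E} (hf : HasDerivAt f f' (‖x‖ ^ 2)) :
    HasFDerivAt (fun y : E => f (‖y‖ ^ 2)) ((2 * f') • innerSL ℝ x) x := by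
  refine (hf.comp_hasFDerivAt x (hasStrictFDerivAt_norm_sq x).hasFDerivAt).congr_fderiv ?_
  module

variable {d : ℕ} {φ : ℝ → ℝ}

theorem hasFDerivAt_radialPotential_norm_sq (hφ : Continuous φ) (x : E) :
    HasFDerivAt (fun y : E => radialPotential d φ (‖y‖ ^ 2))
      (radialMean d φ (‖x‖ ^ 2) • innerSL ℝ x) x := by
  simpa using hasFDerivAt_comp_norm_sq (hasDerivAt_radialPotential (d := d) hφ (‖x‖ ^ 2))

theorem contDiff_radialMean_norm_sq [FiniteDimensional ℝ E] {n : ℕ}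
    (hφ : ContDiff ℝ n fun x : E => φ (‖x‖ ^ 2)) :
    ContDiff ℝ n fun x : E => radialMean d φ (‖x‖ ^ 2) := by
  have hdil : ContDiff ℝ n fun p : E × ℝ => φ (‖p.2 • p.1‖ ^ 2) :=
    hφ.comp (contDiff_snd.smul contDiff_fst)
  simp only [norm_smul, mul_pow, norm_eq_abs, sq_abs] at hdil
  exact contDiff_parametric_intervalIntegral ((contDiff_snd.pow _).mul hdil) 0 1

theorem contDiff_radialPotential_norm_sq [FiniteDimensional ℝ E] {n : ℕ} (hφ : Continuous φ)
    (hφ_norm_sq : ContDiff ℝ n fun x : E => φ (‖x‖ ^ 2)) :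
    ContDiff ℝ (n + 1) fun x : E => radialPotential d φ (‖x‖ ^ 2) :=
  contDiff_succ_iff_hasFDerivAt.2 ⟨_,
    (contDiff_radialMean_norm_sq hφ_norm_sq).smul (innerSL ℝ).contDiff,
    hasFDerivAt_radialPotential_norm_sq hφ⟩

theorem fderiv_radialMean_norm_sq_apply_self (hd : d ≠ 0) (hφ : Continuous φ)
    (hG : Differentiable ℝ fun x : E => radialMean d φ (‖x‖ ^ 2)) (x : E) :
    fderiv ℝ (fun y : E => radialMean d φ (‖y‖ ^ 2)) x x + d * radialMean d φ (‖x‖ ^ 2) =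
      φ (‖x‖ ^ 2) := by
  set G : E → ℝ := fun y => radialMean d φ (‖y‖ ^ 2)
  have hray : HasDerivAt (fun l : ℝ => G (l • x)) (fderiv ℝ G x x) 1 := by
    have hline : HasDerivAt (fun l : ℝ => l • x) x 1 := by
      simpa using (hasDerivAt_id (1 : ℝ)).smul_const x
    exact HasFDerivAt.comp_hasDerivAt_of_eq 1 (hG x).hasFDerivAt hline (one_smul ℝ x).symm
  have hprod := (hasDerivAt_pow d (1 : ℝ)).mul hray
  have hprim : HasDerivAt (fun l : ℝ => l ^ d * G (l • x)) (φ (‖x‖ ^ 2)) 1 := by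
    simp only [G, norm_smul, mul_pow, norm_eq_abs, sq_abs, pow_mul_radialMean_sq_mul hd]
    have hint : Continuous fun τ : ℝ => τ ^ (d - 1) * φ (τ ^ 2 * ‖x‖ ^ 2) := by fun_prop
    simpa using (hint.integral_hasStrictDerivAt 0 1).hasDerivAt
  have := hprod.unique hprim
  simp only [one_pow, mul_one, one_mul, one_smul] at this
  linarith

theorem laplacian_radialPotential_norm_sq [FiniteDimensional ℝ E] [Nontrivial E]
    (hφ : Continuous φ) (hφ_norm_sq : ContDiff ℝ 1 fun x : E => φ (‖x‖ ^ 2)) (x : E) :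
    Δ (fun y : E => radialPotential (finrank ℝ E) φ (‖y‖ ^ 2)) x = φ (‖x‖ ^ 2) := by
  have hG : Differentiable ℝ fun y : E => radialMean (finrank ℝ E) φ (‖y‖ ^ 2) :=
    (contDiff_radialMean_norm_sq (n := 1) (mod_cast hφ_norm_sq)).differentiable (by simp)
  rw [laplacian_eq_of_hasFDerivAt_smul_innerSL (hasFDerivAt_radialPotential_norm_sq hφ) hG,
    fderiv_radialMean_norm_sq_apply_self finrank_pos.ne' hφ hG]

end Laplacian

section SolutionProfile

open Module

/-- `U` and `V` are the profiles, in the variable `s = ‖x‖ ^ 2`, of a radial solution `u` of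
`Δ (Δ u) + u ^ (-q) = 0` in dimension `d` and of its Laplacian, which is bounded away from zero.
The equations `Δ u = v` and `Δ v = -u ^ (-q)` are integrated into equations between continuous
functions. -/
structure IsSolutionProfile (d : ℕ) (q : ℝ) (U V : ℝ → ℝ) : Prop where
  continuous_fst : Continuous U
  continuous_snd : Continuous V
  fst_pos : ∀ s, 0 < U s
  fst_eq : ∀ s, 0 ≤ s → U s = U 0 + radialPotential d V s
  snd_eq : ∀ s, 0 ≤ s → V s = V 0 - radialPotential d (fun σ => U σ ^ (-q)) s
  exists_le_snd : ∃ κ > 0, ∀ s, 0 ≤ s → κ ≤ V s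

namespace IsSolutionProfile

variable {d : ℕ} {q : ℝ} {U V : ℝ → ℝ}

theorem continuous_fst_rpow (h : IsSolutionProfile d q U V) : Continuous fun s => U s ^ (-q) :=
  h.continuous_fst.rpow_const fun s => .inl (h.fst_pos s).ne'

theorem monotone_radialPotential_fst_rpow (h : IsSolutionProfile d q U V) :
    Monotone (radialPotential d fun s => U s ^ (-q)) :=
  monotone_radialPotential h.continuous_fst_rpow fun s => rpow_nonneg (h.fst_pos s).le _

theorem abs_snd_le (h : IsSolutionProfile d q U V) {s : ℝ} (hs : 0 ≤ s) : |V s| ≤ V 0 := by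
  obtain ⟨κ, hκ, hκV⟩ := h.exists_le_snd
  have hnonneg := h.monotone_radialPotential_fst_rpow hs
  rw [radialPotential_apply_zero] at hnonneg
  rw [abs_of_pos (hκ.trans_le (hκV s hs)), h.snd_eq s hs]
  linarith

theorem exists_tendsto_snd (h : IsSolutionProfile d q U V) :
    ∃ ℓ > 0, Tendsto V atTop (𝓝 ℓ) := by
  obtain ⟨κ, hκ, hκV⟩ := h.exists_le_snd
  have hbdd : BddAbove (Set.range (radialPotential d fun s => U s ^ (-q))) := by
    refine ⟨V 0 - κ, Set.forall_mem_range.2 fun s => ?_⟩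
    have := h.monotone_radialPotential_fst_rpow (le_max_left s 0)
    have := hκV _ (le_max_right s 0)
    have := h.snd_eq _ (le_max_right s 0)
    linarith
  have hlim := (tendsto_atTop_ciSup h.monotone_radialPotential_fst_rpow hbdd).const_sub (V 0)
  have hV := hlim.congr' ((eventually_ge_atTop 0).mono fun s hs => (h.snd_eq s hs).symm)
  exact ⟨_, hκ.trans_le (ge_of_tendsto hV ((eventually_ge_atTop 0).mono hκV)), hV⟩

theorem exists_tendsto_fst_div (h : IsSolutionProfile d q U V) (hd : d ≠ 0) :
    ∃ L > 0, Tendsto (fun s => U s / s) atTop (𝓝 L) := by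
  obtain ⟨ℓ, hℓ, hV⟩ := h.exists_tendsto_snd
  refine ⟨ℓ / (2 * d), by positivity, ?_⟩
  have hsum := ((tendsto_const_nhds (x := U 0)).div_atTop tendsto_id).add
    (tendsto_radialPotential_div hd h.continuous_snd (fun _ => h.abs_snd_le) hV)
  rw [zero_add] at hsum
  refine hsum.congr' ((eventually_ge_atTop 0).mono fun s hs => ?_)
  simp only [h.fst_eq s hs, add_div, id]

variable {E : Type*} [NormedAddCommGroup E]

theorem fst_norm_sq_eq (h : IsSolutionProfile d q U V) :
    (fun x : E => U (‖x‖ ^ 2)) = fun x : E => U 0 + radialPotential d V (‖x‖ ^ 2) :=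
  funext fun _ => h.fst_eq _ (sq_nonneg _)

theorem snd_norm_sq_eq (h : IsSolutionProfile d q U V) :
    (fun x : E => V (‖x‖ ^ 2)) =
      fun x : E => V 0 - radialPotential d (fun σ => U σ ^ (-q)) (‖x‖ ^ 2) :=
  funext fun _ => h.snd_eq _ (sq_nonneg _)

variable [InnerProductSpace ℝ E] [FiniteDimensional ℝ E]

theorem contDiff_snd_of_contDiff_fst (h : IsSolutionProfile d q U V) {n : ℕ}
    (hU : ContDiff ℝ n fun x : E => U (‖x‖ ^ 2)) :
    ContDiff ℝ (n + 1) fun x : E => V (‖x‖ ^ 2) := by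
  rw [h.snd_norm_sq_eq]
  exact contDiff_const.sub (contDiff_radialPotential_norm_sq h.continuous_fst_rpow
    (hU.rpow_const_of_ne fun _ => (h.fst_pos _).ne'))

theorem contDiff_fst_of_contDiff_snd (h : IsSolutionProfile d q U V) {n : ℕ}
    (hV : ContDiff ℝ n fun x : E => V (‖x‖ ^ 2)) :
    ContDiff ℝ (n + 1) fun x : E => U (‖x‖ ^ 2) := by
  rw [h.fst_norm_sq_eq]
  exact contDiff_const.add (contDiff_radialPotential_norm_sq h.continuous_snd hV)

theorem contDiff_fst (h : IsSolutionProfile d q U V) :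
    ContDiff ℝ ∞ fun x : E => U (‖x‖ ^ 2) := by
  refine contDiff_infty.2 fun n => ?_
  induction n with
  | zero =>
    have := h.continuous_fst
    exact contDiff_zero.2 (by fun_prop)
  | succ n ih =>
    have hV : ContDiff ℝ n fun x : E => V (‖x‖ ^ 2) :=
      (h.contDiff_snd_of_contDiff_fst ih).of_le le_self_add
    exact mod_cast h.contDiff_fst_of_contDiff_snd hV

theorem contDiff_snd (h : IsSolutionProfile d q U V) :
    ContDiff ℝ ∞ fun x : E => V (‖x‖ ^ 2) :=
  contDiff_infty.2 fun n =>
    (h.contDiff_snd_of_contDiff_fst (contDiff_infty.1 h.contDiff_fst n)).of_le le_self_add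

variable [Nontrivial E]

theorem laplacian_fst (h : IsSolutionProfile (finrank ℝ E) q U V) :
    Δ (fun x : E => U (‖x‖ ^ 2)) = fun x => V (‖x‖ ^ 2) := by
  rw [h.fst_norm_sq_eq, laplacian_const_add]
  exact funext (laplacian_radialPotential_norm_sq h.continuous_snd
    (contDiff_infty.1 h.contDiff_snd 1))

theorem laplacian_snd (h : IsSolutionProfile (finrank ℝ E) q U V) (x : E) :
    Δ (fun x : E => V (‖x‖ ^ 2)) x = -U (‖x‖ ^ 2) ^ (-q) := by
  have hU : ContDiff ℝ 1 fun x : E => U (‖x‖ ^ 2) ^ (-q) :=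
    (contDiff_infty.1 h.contDiff_fst 1).rpow_const_of_ne fun _ => (h.fst_pos _).ne'
  rw [h.snd_norm_sq_eq, laplacian_const_sub, Pi.neg_apply,
    laplacian_radialPotential_norm_sq h.continuous_fst_rpow hU]

end IsSolutionProfile

end SolutionProfile

section Decay

variable {c q : ℝ}

theorem continuous_one_add_mul_abs_rpow (hc : 0 ≤ c) (p : ℝ) :
    Continuous fun s : ℝ => (1 + c * |s|) ^ p :=
  Continuous.rpow_const (by fun_prop) fun s => .inl (by positivity)

theorem integral_one_add_mul_abs_rpow_neg_le (hc : 0 < c) (hq : 1 < q) {y : ℝ} (hy : 0 ≤ y) :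
    ∫ σ in (0 : ℝ)..y, (1 + c * |σ|) ^ (-q) ≤ (c * (q - 1))⁻¹ := by
  have hq_sub : 0 < q - 1 := sub_pos.2 hq
  have habs : ∫ σ in (0 : ℝ)..y, (1 + c * |σ|) ^ (-q) = ∫ σ in (0 : ℝ)..y, (1 + c * σ) ^ (-q) :=
    intervalIntegral.integral_congr fun σ hσ => by
      rw [Set.uIcc_of_le hy] at hσ
      simp only [abs_of_nonneg hσ.1]
  have hnotMem : (0 : ℝ) ∉ Set.uIcc 1 (1 + c * y) := by
    rw [Set.uIcc_of_le (by nlinarith)]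
    exact fun h => absurd h.1 (by norm_num)
  calc ∫ σ in (0 : ℝ)..y, (1 + c * |σ|) ^ (-q)
      = c⁻¹ * ((1 - (1 + c * y) ^ (-q + 1)) / (q - 1)) := by
        rw [habs, intervalIntegral.integral_comp_add_mul (fun σ => σ ^ (-q)) hc.ne', smul_eq_mul,
          mul_zero, add_zero, integral_rpow (.inr ⟨by linarith, hnotMem⟩), one_rpow,
          ← neg_div_neg_eq]
        ring_nf
    _ ≤ c⁻¹ * (1 / (q - 1)) := by
        have hnum : 1 - (1 + c * y) ^ (-q + 1) ≤ 1 := sub_le_self _ (by positivity)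
        exact mul_le_mul_of_nonneg_left (div_le_div_of_nonneg_right hnum hq_sub.le)
          (inv_nonneg.2 hc.le)
    _ = (c * (q - 1))⁻¹ := by rw [one_div, mul_inv]

theorem abs_rpow_neg_sub_le {m x y : ℝ} (hq : 0 ≤ q) (hm : 0 < m) (hx : m ≤ x) (hy : m ≤ y) :
    |x ^ (-q) - y ^ (-q)| ≤ q * m ^ (-q - 1) * |x - y| := by
  refine (convex_Ici m).norm_image_sub_le_of_norm_hasDerivWithin_le
    (f := fun z => z ^ (-q)) (f' := fun z => -q * z ^ (-q - 1))
    (fun z hz => ?_) (fun z hz => ?_) hy hx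
  · exact (hasDerivAt_rpow_const (.inl (hm.trans_le hz).ne')).hasDerivWithinAt
  · have hz_pos := hm.trans_le hz
    rw [norm_mul, norm_neg, norm_of_nonneg hq, norm_of_nonneg (rpow_nonneg hz_pos.le _)]
    exact mul_le_mul_of_nonneg_left (rpow_le_rpow_of_nonpos hm hz (by linarith)) hq

theorem abs_radialPotential_sub_le_of_decay {d : ℕ} {φ ψ : ℝ → ℝ} {M : ℝ} (hd : 3 ≤ d)
    (hc : 0 < c) (hq : 1 < q) (hφ : Continuous φ) (hψ : Continuous ψ)
    (hle : ∀ s, 0 ≤ s → |φ s - ψ s| ≤ M * (1 + c * |s|) ^ (-q)) {s : ℝ} (hs : 0 ≤ s) :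
    |radialPotential d φ s - radialPotential d ψ s| ≤ M / (2 * (c * (q - 1))) := by
  have hM : 0 ≤ M := by simpa using (abs_nonneg _).trans (hle 0 le_rfl)
  have hdecay : Continuous fun σ : ℝ => M * (1 + c * |σ|) ^ (-q) :=
    (continuous_one_add_mul_abs_rpow hc.le _).const_mul M
  have hint : ∀ y, 0 ≤ y → ∫ σ in (0 : ℝ)..y, M * (1 + c * |σ|) ^ (-q) ≤ M * (c * (q - 1))⁻¹ := by
    intro y hy
    rw [intervalIntegral.integral_const_mul]
    exact mul_le_mul_of_nonneg_left (integral_one_add_mul_abs_rpow_neg_le hc hq hy) hM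
  calc |radialPotential d φ s - radialPotential d ψ s|
      ≤ radialPotential d (fun σ => M * (1 + c * |σ|) ^ (-q)) s :=
        abs_radialPotential_sub_le hφ hψ hdecay hle hs
    _ ≤ M * (c * (q - 1))⁻¹ / 2 :=
        radialPotential_le_of_integral_le hd hdecay (fun σ _ => by positivity) hint hs
    _ = M / (2 * (c * (q - 1))) := by field_simp

end Decay

section Picard

/-- The profile of the solution `u` of `Δ u = max v (2 * d * c)`, `u 0 = 1`, where `v` has profile
`V`; extended evenly to `s < 0`, where it carries no meaning. The truncation from below forces
`1 + c * |s| ≤ truncatedProfile d c V s`. -/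
noncomputable def truncatedProfile (d : ℕ) (c : ℝ) (V : ℝ → ℝ) (s : ℝ) : ℝ :=
  1 + radialPotential d (fun σ => max (V σ) (2 * d * c)) |s|

/-- The map sending `V` to the profile of the solution `v` of `Δ v = -u ^ (-q)`,
`v 0 = 2 * d * c + 1`, where `u` has profile `truncatedProfile d c V`. -/
noncomputable def picardMap (d : ℕ) (q c : ℝ) (V : ℝ → ℝ) (s : ℝ) : ℝ :=
  2 * d * c + 1 - radialPotential d (fun σ => truncatedProfile d c V σ ^ (-q)) |s|

variable {d : ℕ} {c q : ℝ} {V W : ℝ → ℝ}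

theorem continuous_truncatedProfile (hV : Continuous V) : Continuous (truncatedProfile d c V) :=
  ((continuous_radialPotential (hV.max continuous_const)).comp continuous_abs).const_add 1

theorem one_add_mul_abs_le_truncatedProfile (hd : d ≠ 0) (hV : Continuous V) (s : ℝ) :
    1 + c * |s| ≤ truncatedProfile d c V s := by
  have hmono := radialPotential_mono (d := d) continuous_const (hV.max continuous_const)
    (fun σ _ => le_max_right (V σ) (2 * d * c)) (abs_nonneg s)
  rw [radialPotential_const hd, mul_assoc, mul_div_cancel_left₀ _ (by positivity)] at hmono
  exact add_le_add_right hmono 1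

theorem truncatedProfile_pos (hd : d ≠ 0) (hc : 0 ≤ c) (hV : Continuous V) (s : ℝ) :
    0 < truncatedProfile d c V s :=
  lt_of_lt_of_le (by positivity) (one_add_mul_abs_le_truncatedProfile hd hV s)

theorem continuous_truncatedProfile_rpow (hd : d ≠ 0) (hc : 0 ≤ c) (hV : Continuous V) (p : ℝ) :
    Continuous fun s => truncatedProfile d c V s ^ p :=
  (continuous_truncatedProfile hV).rpow_const fun s => .inl (truncatedProfile_pos hd hc hV s).ne'

theorem continuous_picardMap (hd : d ≠ 0) (hc : 0 ≤ c) (hV : Continuous V) :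
    Continuous (picardMap d q c V) :=
  continuous_const.sub
    ((continuous_radialPotential (continuous_truncatedProfile_rpow hd hc hV _)).comp continuous_abs)

theorem abs_truncatedProfile_sub_le (hd : d ≠ 0) (hV : Continuous V) (hW : Continuous W) {δ : ℝ}
    (hδ : ∀ s, |V s - W s| ≤ δ) (s : ℝ) :
    |truncatedProfile d c V s - truncatedProfile d c W s| ≤ δ * |s| / (2 * d) := by
  rw [truncatedProfile, truncatedProfile, add_sub_add_left_eq_sub, ← radialPotential_const hd]
  exact abs_radialPotential_sub_le (hV.max continuous_const) (hW.max continuous_const)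
    continuous_const (fun σ _ => (abs_max_sub_max_le_abs _ _ _).trans (hδ σ)) (abs_nonneg s)

theorem abs_truncatedProfile_rpow_neg_sub_le (hd : d ≠ 0) (hc : 0 < c) (hq : 0 ≤ q)
    (hV : Continuous V) (hW : Continuous W) {δ : ℝ} (hδ : ∀ s, |V s - W s| ≤ δ) (s : ℝ) :
    |truncatedProfile d c V s ^ (-q) - truncatedProfile d c W s ^ (-q)| ≤
      q * δ / (2 * d * c) * (1 + c * |s|) ^ (-q) := by
  have hpos : 0 < 1 + c * |s| := by positivity
  have hδ_nonneg : 0 ≤ δ := (abs_nonneg _).trans (hδ 0)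
  calc |truncatedProfile d c V s ^ (-q) - truncatedProfile d c W s ^ (-q)|
      ≤ q * (1 + c * |s|) ^ (-q - 1) * |truncatedProfile d c V s - truncatedProfile d c W s| :=
        abs_rpow_neg_sub_le hq hpos (one_add_mul_abs_le_truncatedProfile hd hV s)
          (one_add_mul_abs_le_truncatedProfile hd hW s)
    _ ≤ q * (1 + c * |s|) ^ (-q - 1) * (δ / (2 * d * c) * (1 + c * |s|)) := by
        gcongr
        refine (abs_truncatedProfile_sub_le hd hV hW hδ s).trans ?_
        calc δ * |s| / (2 * d) = δ / (2 * d * c) * (c * |s|) := by field_simp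
          _ ≤ δ / (2 * d * c) * (1 + c * |s|) := by gcongr; linarith
    _ = q * δ / (2 * d * c) * (1 + c * |s|) ^ (-q) := by
        rw [rpow_sub_one hpos.ne']
        field_simp

theorem abs_picardMap_sub_le (hd : 3 ≤ d) (hc : 0 < c) (hq : 1 < q) (hV : Continuous V)
    (hW : Continuous W) {δ : ℝ} (hδ : ∀ s, |V s - W s| ≤ δ) (s : ℝ) :
    |picardMap d q c V s - picardMap d q c W s| ≤
      q * δ / (2 * d * c) / (2 * (c * (q - 1))) := by
  have hd_ne : d ≠ 0 := by omega
  rw [picardMap, picardMap, sub_sub_sub_cancel_left, abs_sub_comm]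
  exact abs_radialPotential_sub_le_of_decay hd hc hq
    (continuous_truncatedProfile_rpow hd_ne hc.le hV _)
    (continuous_truncatedProfile_rpow hd_ne hc.le hW _)
    (fun σ _ => abs_truncatedProfile_rpow_neg_sub_le hd_ne hc (by linarith) hV hW hδ σ)
    (abs_nonneg s)

theorem abs_sub_picardMap_le (hd : 3 ≤ d) (hc : 0 < c) (hq : 1 < q) (hV : Continuous V) (s : ℝ) :
    |2 * d * c + 1 - picardMap d q c V s| ≤ 1 / (2 * (c * (q - 1))) := by
  have hd_ne : d ≠ 0 := by omega
  rw [picardMap, sub_sub_self]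
  have hle : ∀ σ : ℝ, 0 ≤ σ →
      |truncatedProfile d c V σ ^ (-q) - 0| ≤ 1 * (1 + c * |σ|) ^ (-q) := fun σ _ => by
    rw [sub_zero, one_mul, abs_of_pos (rpow_pos_of_pos (truncatedProfile_pos hd_ne hc.le hV σ) _)]
    exact rpow_le_rpow_of_nonpos (by positivity) (one_add_mul_abs_le_truncatedProfile hd_ne hV σ)
      (by linarith)
  simpa only [radialPotential_const hd_ne, zero_mul, zero_div, sub_zero] using
    abs_radialPotential_sub_le_of_decay hd hc hq
      (continuous_truncatedProfile_rpow hd_ne hc.le hV _) continuous_const hle (abs_nonneg s)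

theorem isSolutionProfile_of_picardMap_eq (hd : d ≠ 0) (hc : 0 < c) (hV : Continuous V)
    (hfix : picardMap d q c V = V) (hle : ∀ s, 2 * d * c ≤ V s) :
    IsSolutionProfile d q (truncatedProfile d c V) V where
  continuous_fst := continuous_truncatedProfile hV
  continuous_snd := hV
  fst_pos := truncatedProfile_pos hd hc.le hV
  fst_eq s hs := by simp [truncatedProfile, max_eq_left (hle _), abs_of_nonneg hs]
  snd_eq s hs := by
    have hzero : V 0 = 2 * d * c + 1 := by rw [← hfix]; simp [picardMap]
    nth_rewrite 1 [hzero, ← hfix]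
    rw [picardMap, abs_of_nonneg hs]
  exists_le_snd := ⟨2 * d * c, by positivity, fun s _ => hle s⟩

theorem exists_isSolutionProfile (hd : 3 ≤ d) (hq : 1 < q) :
    ∃ U V, IsSolutionProfile d q U V := by
  have hd_ne : d ≠ 0 := by omega
  have hq_sub : 0 < q - 1 := sub_pos.2 hq
  -- `c = q / (q - 1)` keeps `v` within `1` of `v 0` and the contraction constant at most `1 / 2`.
  obtain ⟨c, hc, hcq⟩ : ∃ c : ℝ, 1 ≤ c ∧ c * (q - 1) = q :=
    ⟨q / (q - 1), (one_le_div hq_sub).2 (by linarith), div_mul_cancel₀ _ hq_sub.ne'⟩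
  have hc_pos : 0 < c := one_pos.trans_le hc
  have hclose : ∀ V, Continuous V → ∀ s, |2 * d * c + 1 - picardMap d q c V s| ≤ 1 :=
    fun V hV s => by
      refine (abs_sub_picardMap_le hd hc_pos hq hV s).trans ?_
      rw [hcq, div_le_one (by positivity)]
      linarith
  have hcontract : ∀ V W, Continuous V → Continuous W → ∀ δ, (∀ s, |V s - W s| ≤ δ) →
      ∀ s, |picardMap d q c V s - picardMap d q c W s| ≤ 2⁻¹ * δ := fun V W hV hW δ hδ s => by
    have hδ_nonneg : 0 ≤ δ := (abs_nonneg _).trans (hδ 0)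
    have hdc : 1 ≤ 2 * d * c := by
      have : (3 : ℝ) ≤ d := mod_cast hd
      nlinarith
    calc |picardMap d q c V s - picardMap d q c W s|
        ≤ q * δ / (2 * d * c) / (2 * (c * (q - 1))) := abs_picardMap_sub_le hd hc_pos hq hV hW hδ s
      _ = 2⁻¹ * (δ / (2 * d * c)) := by rw [hcq]; field_simp
      _ ≤ 2⁻¹ * δ := by gcongr; exact div_le_self hδ_nonneg hdc
  have hbound : ∀ V, Continuous V → ∀ s, |picardMap d q c V s| ≤ 2 * d * c + 2 := fun V hV s => by
    have := abs_le.1 (hclose V hV s)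
    have : 0 < 2 * d * c := by positivity
    exact abs_le.2 ⟨by linarith, by linarith⟩
  obtain ⟨V, hV, hfix⟩ := exists_continuous_fixedPoint (K := 2⁻¹) (by norm_num)
    (fun V => continuous_picardMap hd_ne hc_pos.le) ⟨_, hbound⟩ hcontract
  refine ⟨_, V, isSolutionProfile_of_picardMap_eq hd_ne hc_pos hV hfix fun s => ?_⟩
  have := (abs_le.1 (hclose V hV s)).2
  rw [hfix] at this
  linarith

end Picard

theorem exists_radial_solution_quadratic_growth_general {E : Type*} [NormedAddCommGroup E]
    [InnerProductSpace ℝ E] [FiniteDimensional ℝ E] (hE : 3 ≤ Module.finrank ℝ E) {q : ℝ}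
    (hq : 1 < q) :
    ∃ u : E → ℝ,
      ContDiff ℝ ∞ u ∧ (∀ x, 0 < u x) ∧
      (∀ x, Δ (Δ u) x + u x ^ (-q) = 0) ∧
      (∀ x y, ‖x‖ = ‖y‖ → u x = u y) ∧
      ∃ L : ℝ, 0 < L ∧ Tendsto (fun x => u x / ‖x‖ ^ 2) (cocompact E) (𝓝 L) := by
  have : Nontrivial E := Module.nontrivial_of_finrank_pos (R := ℝ) (by omega)
  obtain ⟨U, V, h⟩ := exists_isSolutionProfile hE hq
  obtain ⟨L, hL, hlim⟩ := h.exists_tendsto_fst_div (by omega)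
  refine ⟨fun x => U (‖x‖ ^ 2), h.contDiff_fst, fun x => h.fst_pos _, fun x => ?_,
    fun x y hxy => by simp only [hxy], L, hL, ?_⟩
  · rw [h.laplacian_fst, h.laplacian_snd, neg_add_cancel]
  · exact hlim.comp ((tendsto_pow_atTop two_ne_zero).comp tendsto_norm_cocompact_atTop)

theorem laplacian_eq_innerProductSpace_laplacian (u : EuclideanSpace ℝ (Fin 3) → ℝ) :
    laplacian u = Δ u := by
  rw [InnerProductSpace.laplacian_eq_iteratedFDeriv_orthonormalBasis u
    (EuclideanSpace.basisFun (Fin 3) ℝ)]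
  ext x
  simp [laplacian]

/-- **Theorem.** For `q > 1` there exists a radially symmetric positive `C⁴` solution of
`Δ²u + u^{-q} = 0` on ℝ³ with exact quadratic growth: `u(x)/|x|²` converges to a limit in
`(0,∞)` as `|x| → ∞`. -/
theorem exists_radial_solution_quadratic_growth
    (q : ℝ) (hq : 1 < q) :
    ∃ u : EuclideanSpace ℝ (Fin 3) → ℝ,
      ContDiff ℝ 4 u ∧ (∀ x, 0 < u x) ∧
      (∀ x, laplacian (laplacian u) x + (u x) ^ (-q) = 0) ∧
      (∀ x y, ‖x‖ = ‖y‖ → u x = u y) ∧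
      ∃ L : ℝ, 0 < L ∧
        Tendsto (fun x => u x / ‖x‖ ^ 2) (cocompact (EuclideanSpace ℝ (Fin 3))) (𝓝 L) := by
  obtain ⟨u, hu, hpos, heq, hrad, hlim⟩ :=
    exists_radial_solution_quadratic_growth_general (by rw [finrank_euclideanSpace_fin]) hq
  exact ⟨u, contDiff_infty.1 hu 4, hpos,
    by simpa only [laplacian_eq_innerProductSpace_laplacian] using heq, hrad, hlim⟩
end
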